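/- arXiv:1109.5524 — 2 statements merged into one kernel-verified Lean document; each statement's English description precedes it below -/
import Mathlib

section
/- σ-transformation of the Wronskian supercharacters. For every integer a ≥ 0 and every s ∈ ℤ, the Wronskian supercharacter χ^{B1,B2,F1,F2}_{a,s} evaluated with every parameter z_i replaced by z^σ_i equals (∏_{b∈B̂} z_b / ∏_{f∈F̂} (−z_f))^a · χ^{B̂1,B̂2,F̂1,F̂2}_{a,−s} evaluated at the original parameters z, where B̂1 = (M+1−b : b∈B2), B̂2 = (M+1−b : b∈B1), F̂1 = (2M+N+1−f : f∈F2), F̂2 = (2M+N+1−f : f∈F1), B̂ = B̂1⊔B̂2, F̂ = F̂1⊔F̂2, and χ^{B̂1,B̂2,F̂1,F̂2} is the Wronskian supercharacter built from the hatted tuples (of lengths m2, m1, n2, n1). -/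
open scoped BigOperators

namespace Stmt4

/-- The integer segment tuple `⟨a,b⟩ = (a, a+1, …, b)`, empty when `b < a`. -/
def seg (a b : ℤ) : List ℤ := (List.range (b - a + 1).toNat).map (fun k => a + (k : ℤ))

/-- Product of `g x y` over ordered pairs `x ≺ y` in the list `L`. -/
def pairProd {ι : Type*} (L : List ι) (g : ι → ι → ℂ) : ℂ :=
  ∏ i : Fin L.length, ∏ j : Fin L.length, if i < j then g (L.get i) (L.get j) else 1

/-- Product of `g x` over a list. -/
def prodL {ι : Type*} (L : List ι) (g : ι → ℂ) : ℂ := (L.map g).prod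

/-- Product of `g x y` over pairs `(x, y) ∈ L × M`. -/
def prodLL {ι : Type*} (L M : List ι) (g : ι → ι → ℂ) : ℂ :=
  (L.map (fun x => (M.map (g x)).prod)).prod

/-- Determinant of the square matrix whose rows and columns are labelled by the given
key lists (by convention `0` if the two lists have different lengths). -/
noncomputable def listDet {α β : Type*} (rows : List α) (cols : List β) (e : α → β → ℂ) : ℂ :=
  if h : rows.length = cols.length then
    Matrix.det (Matrix.of fun i j : Fin rows.length =>
      e (rows.get i) (cols.get (Fin.cast h j)))
  else 0

/-- The sparse determinant `Δ^{B1,B2,R,(η)}_{F,S,T1,T2}`. -/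
noncomputable def Delta {ι : Type*} (z : ι → ℂ) (B1 B2 F : List ι)
    (R S T1 T2 : List ℤ) (η : ℤ) : ℂ :=
  listDet
    ((B1.map (Sum.inl : ι → ι ⊕ (ι ⊕ ℤ)) ++
      B2.map (fun b => (Sum.inr (Sum.inl b) : ι ⊕ (ι ⊕ ℤ))) ++
      R.map (fun r => (Sum.inr (Sum.inr r) : ι ⊕ (ι ⊕ ℤ)))))
    ((F.map (Sum.inl : ι → ι ⊕ (ℤ ⊕ (ℤ ⊕ ℤ))) ++
      S.map (fun j => (Sum.inr (Sum.inl j) : ι ⊕ (ℤ ⊕ (ℤ ⊕ ℤ)))) ++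
      T1.map (fun j => (Sum.inr (Sum.inr (Sum.inl j)) : ι ⊕ (ℤ ⊕ (ℤ ⊕ ℤ)))) ++
      T2.map (fun j => (Sum.inr (Sum.inr (Sum.inr j)) : ι ⊕ (ℤ ⊕ (ℤ ⊕ ℤ))))))
    (fun row col =>
      match row, col with
      | Sum.inl b, Sum.inl f => 1 / (z b - z f)
      | Sum.inl b, Sum.inr (Sum.inl j) => z b ^ (j - 1)
      | Sum.inl b, Sum.inr (Sum.inr (Sum.inl j)) => z b ^ (j - 1)
      | Sum.inl _, Sum.inr (Sum.inr (Sum.inr _)) => 0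
      | Sum.inr (Sum.inl b), Sum.inl f => (-z f / z b) ^ η / (z b - z f)
      | Sum.inr (Sum.inl b), Sum.inr (Sum.inl j) => z b ^ (j - 1)
      | Sum.inr (Sum.inl _), Sum.inr (Sum.inr (Sum.inl _)) => 0
      | Sum.inr (Sum.inl b), Sum.inr (Sum.inr (Sum.inr j)) => z b ^ (j - 1)
      | Sum.inr (Sum.inr r), Sum.inl f => (-z f) ^ (r - 1)
      | Sum.inr (Sum.inr _), Sum.inr _ => 0)

/-- The denominator formula `D(B|F)`. -/
noncomputable def Dden {ι : Type*} (z : ι → ℂ) (B F : List ι) : ℂ :=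
  pairProd B (fun b b' => z b - z b') * pairProd F (fun f f' => z f' - z f) /
    prodLL B F (fun b f => z b - z f)

/-- `χ` is the Wronskian supercharacter family for the data `(z, B1, B2, F1, F2)`:
it vanishes outside the generalized T-hook and is given by the eight regional
sparse determinant formulas inside the hook. -/
def IsChi {ι : Type*} (z : ι → ℂ) (B1 B2 F1 F2 : List ι) (χ : ℤ → ℤ → ℂ) : Prop :=
  let m1 : ℤ := B1.length
  let m2 : ℤ := B2.length
  let n1 : ℤ := F1.length
  let n2 : ℤ := F2.length
  let η1 : ℤ := m1 - n1
  let η2 : ℤ := m2 - n2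
  let θ : ℤ := (m1 + m2) * (m1 + m2 - 1) / 2 + (n1 + n2) * (n1 + n2 - 1) / 2
  let F : List ι := F1 ++ F2
  let Dd : ℂ := Dden z (B1 ++ B2) F
  (∀ a s : ℤ, (a < 0 ∨ (m1 < a ∧ n1 < s) ∨ (m2 < a ∧ s < -n2)) → χ a s = 0) ∧
  (∀ a s : ℤ, s + η1 ≤ a → -s + η2 ≤ a → 0 ≤ a → -η1 ≤ s → s ≤ η2 →
    χ a s = (-1 : ℂ) ^ ((s + η1) * (s + n2) + θ) *
      Delta z B1 B2 F [] [] (seg 1 (s + η1)) (seg (s - a + η1 + 1) (-a + η1 + η2))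
        (a - s - η1) / Dd) ∧
  (∀ a s : ℤ, s + η1 ≤ a → -s + η2 ≤ a → 0 ≤ a → -η1 ≤ s → η2 ≤ s →
    χ a s = (-1 : ℂ) ^ ((s + η1) * (s + n2) + θ) *
      Delta z B1 B2 F (seg (a - s - η1 + 1) (a - η1 - η2)) [] (seg 1 (s + η1)) []
        (a - s - η1) / Dd) ∧
  (∀ a s : ℤ, s + η1 ≤ a → -s + η2 ≤ a → 0 ≤ a → s ≤ -η1 → s ≤ η2 →
    χ a s = (-1 : ℂ) ^ ((s + η1) * m2 + θ) *
      Delta z B1 B2 F (seg 1 (-s - η1)) [] [] (seg (s - a + η1 + 1) (-a + η1 + η2))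
        (a - s - η1) / Dd) ∧
  (∀ a s : ℤ, s + η1 ≤ a → -s + η2 ≤ a → 0 ≤ a → η2 ≤ s → s ≤ -η1 →
    χ a s = (-1 : ℂ) ^ ((s + η1) * m2 + θ) *
      Delta z B1 B2 F (seg 1 (-s - η1) ++ seg (a - s - η1 + 1) (a - η1 - η2)) [] [] []
        (a - s - η1) / Dd) ∧
  (∀ a s : ℤ, a ≤ s + η1 → a ≤ η1 + η2 →
    χ a s = (-1 : ℂ) ^ (a * m2 + θ) *
      Delta z B1 B2 F [] (seg 1 (-a + η1 + η2)) (seg (s - a + η1 + 1) (s + η1)) [] 0 / Dd) ∧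
  (∀ a s : ℤ, η1 + η2 ≤ a → a ≤ s + η1 →
    χ a s = (-1 : ℂ) ^ (a * (η1 + n2 + 1) + θ) *
      Delta z B1 B2 F (seg 1 (a - η1 - η2)) [] (seg (s - a + η1 + 1) (s + η1)) [] 0 / Dd) ∧
  (∀ a s : ℤ, a ≤ -s + η2 → a ≤ η1 + η2 →
    χ a s = (-1 : ℂ) ^ (a * (1 + m2) + θ) *
      Delta z B1 B2 F [] (seg 1 (-a + η1 + η2)) [] (seg (s - a + η1 + 1) (s + η1)) 0 / Dd) ∧
  (∀ a s : ℤ, η1 + η2 ≤ a → a ≤ -s + η2 →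
    χ a s = (-1 : ℂ) ^ (a * (η1 + n2) + θ) *
      Delta z B1 B2 F (seg 1 (a - η1 - η2)) [] [] (seg (s - a + η1 + 1) (s + η1)) 0 / Dd)


section kit

variable {α β γ δ : Type*}

lemma listDet_eq (rows : List α) (cols : List β) (e : α → β → ℂ) (n : ℕ)
    (hr : rows.length = n) (hc : cols.length = n) :
    listDet rows cols e = Matrix.det (Matrix.of fun i j : Fin n =>
      e (rows[i.1]'(by omega)) (cols[j.1]'(by omega))) := by
  subst hr
  unfold listDet
  rw [dif_pos hc.symm]
  rfl

lemma listDet_ne (rows : List α) (cols : List β) (e : α → β → ℂ)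
    (h : rows.length ≠ cols.length) : listDet rows cols e = 0 := by
  unfold listDet
  rw [dif_neg h]

lemma listDet_congr (rows : List α) (cols : List β) (e e' : α → β → ℂ)
    (h : ∀ r ∈ rows, ∀ c ∈ cols, e r c = e' r c) :
    listDet rows cols e = listDet rows cols e' := by
  unfold listDet
  split_ifs with hl
  · congr 1
    ext i j
    exact h _ (List.getElem_mem _) _ (List.getElem_mem _)
  · rfl

lemma listDet_map (rows : List α) (cols : List β) (f : α → γ) (g : β → δ) (e : γ → δ → ℂ) :
    listDet (rows.map f) (cols.map g) e = listDet rows cols (fun r c => e (f r) (g c)) := by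
  by_cases h : rows.length = cols.length
  · rw [listDet_eq _ _ _ rows.length (by simp) (by simp [h]),
      listDet_eq _ _ _ rows.length rfl h.symm]
    simp
  · rw [listDet_ne _ _ _ h, listDet_ne _ _ _ (by simpa using h)]

lemma listDet_transpose (rows : List α) (cols : List β) (e : α → β → ℂ) :
    listDet rows cols e = listDet cols rows (fun c r => e r c) := by
  by_cases h : rows.length = cols.length
  · rw [listDet_eq _ _ _ rows.length rfl h.symm,
      listDet_eq _ _ _ rows.length h.symm rfl, ← Matrix.det_transpose]
    rfl
  · rw [listDet_ne _ _ _ h, listDet_ne _ _ _ (Ne.symm h)]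

lemma prod_getElem (L : List α) (n : ℕ) (h : L.length = n) (u : α → ℂ) :
    ∏ i : Fin n, u (L[i.1]'(by omega)) = (L.map u).prod := by
  subst h
  rw [← List.prod_ofFn]
  congr 1
  apply List.ext_getElem <;> simp

lemma sum_getElem (L : List α) (n : ℕ) (h : L.length = n) (u : α → ℂ) :
    ∑ i : Fin n, u (L[i.1]'(by omega)) = (L.map u).sum := by
  subst h
  rw [← List.sum_ofFn]
  congr 1
  apply List.ext_getElem <;> simp

lemma listDet_row_scale (rows : List α) (cols : List β) (u : α → ℂ) (e : α → β → ℂ) :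
    listDet rows cols (fun r c => u r * e r c) = (rows.map u).prod * listDet rows cols e := by
  by_cases h : rows.length = cols.length
  · rw [listDet_eq _ _ _ rows.length rfl h.symm, listDet_eq _ _ _ rows.length rfl h.symm]
    have := Matrix.det_mul_column (fun i : Fin rows.length => u (rows[i.1]))
      (Matrix.of fun i j : Fin rows.length => e (rows[i.1]) (cols[j.1]'(by omega)))
    rw [← prod_getElem rows _ rfl, ← this]
    rfl
  · rw [listDet_ne _ _ _ h, listDet_ne _ _ _ h, mul_zero]

lemma listDet_col_scale (rows : List α) (cols : List β) (v : β → ℂ) (e : α → β → ℂ) :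
    listDet rows cols (fun r c => v c * e r c) = (cols.map v).prod * listDet rows cols e := by
  rw [listDet_transpose, listDet_row_scale, ← listDet_transpose]

lemma listDet_colop (rows : List α) (cols : List β) (e : α → β → ℂ) (P : β → Prop)
    (K : β → β → ℂ) (hK : ∀ c d, ¬ (P d ∧ ¬ P c) → K c d = 0) :
    listDet rows cols (fun r d => e r d + (cols.map fun c => e r c * K c d).sum) =
      listDet rows cols e := by
  classical
  by_cases h : rows.length = cols.length
  · rw [listDet_eq _ _ _ cols.length h rfl, listDet_eq _ _ _ cols.length h rfl]
    set A := (Matrix.of fun i j : Fin cols.length => e (rows[i.1]'(by omega)) (cols[j.1])) with hA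
    set V : Matrix (Fin cols.length) (Fin cols.length) ℂ :=
      Matrix.of fun i j => K cols[i.1] cols[j.1] with hV
    have h1 : (Matrix.of fun i j : Fin cols.length => e (rows[i.1]'(by omega)) (cols[j.1]) +
        (cols.map fun c => e (rows[i.1]'(by omega)) c * K c cols[j.1]).sum) = A * (1 + V) := by
      rw [mul_add, mul_one]
      ext i j
      simp only [Matrix.of_apply, Matrix.add_apply, Matrix.mul_apply, hA, hV]
      rw [← sum_getElem cols _ rfl]
    rw [h1, Matrix.det_mul]
    have h2 : (1 + V).det = 1 := by
      rw [Matrix.twoBlockTriangular_det' (1 + V) (fun i => P cols[i.1])]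
      · have e1 : (1 + V).toSquareBlockProp (fun i => P cols[i.1]) = 1 := by
          ext i j
          have : K cols[i.1.1] cols[j.1.1] = 0 := hK _ _ (fun hh => hh.2 i.2)
          simp [Matrix.toSquareBlockProp, hV, this, Matrix.one_apply, Subtype.ext_iff]
        have e2 : (1 + V).toSquareBlockProp (fun i => ¬ P cols[i.1]) = 1 := by
          ext i j
          have : K cols[i.1.1] cols[j.1.1] = 0 := hK _ _ (fun hh => j.2 hh.1)
          simp [Matrix.toSquareBlockProp, hV, this, Matrix.one_apply, Subtype.ext_iff]
        rw [e1, e2]; simp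
      · intro i hi j hj
        have : i ≠ j := fun hh => hj (hh ▸ hi)
        simp [hV, this, hK _ _ (fun hh => hj hh.1)]
    rw [h2, mul_one]
  · rw [listDet_ne _ _ _ h, listDet_ne _ _ _ h]

lemma listDet_rowop (rows : List α) (cols : List β) (e : α → β → ℂ) (P : α → Prop)
    (K : α → α → ℂ) (hK : ∀ c d, ¬ (P d ∧ ¬ P c) → K c d = 0) :
    listDet rows cols (fun d r => e d r + (rows.map fun c => e c r * K c d).sum) =
      listDet rows cols e := by
  rw [listDet_transpose, listDet_colop cols rows (fun c r => e r c) P K hK, ← listDet_transpose]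

/-- alternating functions of lists -/
def Alt (f : List α → ℂ) : Prop := ∀ A x y D, f (A ++ x :: y :: D) = - f (A ++ y :: x :: D)

lemma alt_rows (cols : List β) (e : α → β → ℂ) : Alt (fun rows => listDet rows cols e) := by
  intro A x y D
  by_cases h : (A ++ x :: y :: D).length = cols.length
  · have h' : (A ++ y :: x :: D).length = cols.length := by simpa using h
    simp only
    rw [listDet_eq _ _ _ cols.length h rfl, listDet_eq _ _ _ cols.length h' rfl]
    have hl : A.length + 1 < cols.length := by simp at h; omega
    set i0 : Fin cols.length := ⟨A.length, by omega⟩ with hi0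
    set i1 : Fin cols.length := ⟨A.length + 1, by omega⟩ with hi1
    have hne : i0 ≠ i1 := by simp [hi0, hi1]
    have := Matrix.det_permute (Equiv.swap i0 i1) (Matrix.of fun i j : Fin cols.length =>
      e ((A ++ y :: x :: D)[i.1]'(by omega)) (cols[j.1]))
    rw [Equiv.Perm.sign_swap hne] at this
    simp only [Units.val_neg, Units.val_one, Int.cast_neg, Int.cast_one, neg_mul, one_mul] at this
    rw [← this]
    congr 1
    ext i j
    simp only [Matrix.of_apply, Matrix.submatrix_apply, id]
    congr 1
    rcases eq_or_ne i i0 with rfl | h0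
    · rw [Equiv.swap_apply_left]
      simp [hi0, hi1]
    · rcases eq_or_ne i i1 with rfl | h1
      · rw [Equiv.swap_apply_right]
        simp [hi0, hi1]
      · rw [Equiv.swap_apply_of_ne_of_ne h0 h1]
        have g0 : i.1 ≠ A.length := fun hh => h0 (Fin.ext hh)
        have g1 : i.1 ≠ A.length + 1 := fun hh => h1 (Fin.ext hh)
        rcases lt_or_ge i.1 A.length with hlt | hge
        · simp [List.getElem_append_left hlt]
        · rw [List.getElem_append_right hge, List.getElem_append_right hge]
          obtain ⟨k, hk⟩ : ∃ k, i.1 - A.length = k + 2 := ⟨i.1 - A.length - 2, by omega⟩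
          simp [hk]
  · have h' : (A ++ y :: x :: D).length ≠ cols.length := by simpa using h
    simp only
    rw [listDet_ne _ _ _ h, listDet_ne _ _ _ h', neg_zero]

lemma alt_cols (rows : List α) (e : α → β → ℂ) : Alt (fun cols => listDet rows cols e) := by
  intro A x y D
  have := alt_rows rows (fun c r => e r c) A x y D
  simp only at this ⊢
  rw [listDet_transpose, this, ← listDet_transpose]

lemma Alt.move {f : List α → ℂ} (hf : Alt f) (A : List α) (x : α) (L D : List α) :
    f (A ++ x :: (L ++ D)) = (-1) ^ L.length * f (A ++ (L ++ x :: D)) := by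
  induction L generalizing A with
  | nil => simp
  | cons y L ih =>
    have h1 := hf A x y (L ++ D)
    have h2 := ih (A ++ [y])
    simp only [List.append_assoc, List.cons_append, List.nil_append] at h1 h2 ⊢
    rw [h1, h2, List.length_cons, pow_succ]
    ring

lemma Alt.swap {f : List α → ℂ} (hf : Alt f) (A L K D : List α) :
    f (A ++ (L ++ (K ++ D))) = (-1) ^ (L.length * K.length) * f (A ++ (K ++ (L ++ D))) := by
  induction L generalizing A with
  | nil => simp
  | cons x L ih =>
    have h1 := ih (A ++ [x])
    have h2 := hf.move A x K (L ++ D)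
    simp only [List.append_assoc, List.cons_append, List.nil_append] at h1 h2 ⊢
    rw [h1, h2, List.length_cons, add_mul, pow_add, one_mul]
    ring

lemma Alt.rev {f : List α → ℂ} (hf : Alt f) (A L D : List α) :
    f (A ++ (L ++ D)) = (-1) ^ (L.length.choose 2) * f (A ++ (L.reverse ++ D)) := by
  induction L generalizing D with
  | nil => simp
  | cons x L ih =>
    have h2 := hf.move A x L D
    have h1 := ih (x :: D)
    simp only [List.append_assoc, List.cons_append, List.nil_append, List.reverse_cons] at h1 h2 ⊢
    rw [h2, h1, List.length_cons, Nat.choose_succ_succ' L.length 1, pow_add, Nat.choose_one_right]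
    ring

end kit

section dens

variable {ι κ : Type*}

lemma pairProd_nil (g : ι → ι → ℂ) : pairProd [] g = 1 := by
  simp [pairProd]

lemma pairProd_cons (x : ι) (L : List ι) (g : ι → ι → ℂ) :
    pairProd (x :: L) g = (L.map (g x)).prod * pairProd L g := by
  unfold pairProd
  rw [← prod_getElem L L.length rfl]
  change (∏ i : Fin (L.length + 1), ∏ j : Fin (L.length + 1), _) = _
  rw [Fin.prod_univ_succ]
  congr 1
  · rw [Fin.prod_univ_succ]
    simp
  · refine Finset.prod_congr rfl fun i _ => ?_
    rw [Fin.prod_univ_succ]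
    simp

lemma pairProd_map (z : ι → κ) (L : List ι) (g : κ → κ → ℂ) :
    pairProd (L.map z) g = pairProd L (fun x y => g (z x) (z y)) := by
  induction L with
  | nil => simp [pairProd_nil]
  | cons x L ih =>
    rw [List.map_cons, pairProd_cons, pairProd_cons, ih, List.map_map]
    rfl

lemma prodLL_map (z : ι → κ) (L M : List ι) (g : κ → κ → ℂ) :
    prodLL (L.map z) (M.map z) g = prodLL L M (fun x y => g (z x) (z y)) := by
  simp [prodLL, List.map_map, Function.comp_def]

lemma Dden_map (z : ι → ℂ) (B F : List ι) :
    Dden z B F = Dden id (B.map z) (F.map z) := by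
  simp [Dden, pairProd_map, prodLL_map]

lemma pairProd_congr_alt (g : ι → ι → ℂ) (hg : ∀ x y, g x y = - g y x) :
    Alt (fun L => pairProd L g) := by
  intro A x y D
  simp only
  induction A with
  | nil =>
    simp only [List.nil_append, pairProd_cons, List.map_cons, List.prod_cons]
    rw [hg x y]; ring
  | cons w A ih =>
    simp only [List.cons_append, pairProd_cons, ih, List.map_append, List.prod_append,
      List.map_cons, List.prod_cons]
    ring

lemma prodLL_swap (X1 X2 Y1 Y2 : List ι) (g : ι → ι → ℂ) :
    prodLL (X1 ++ X2) (Y1 ++ Y2) g = prodLL (X2 ++ X1) (Y2 ++ Y1) g := by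
  simp only [prodLL, List.map_append, List.prod_append, List.prod_map_mul]
  ring

lemma Dden_swap (X1 X2 Y1 Y2 : List ℂ) :
    Dden id (X1 ++ X2) (Y1 ++ Y2) =
      (-1) ^ (X1.length * X2.length + Y1.length * Y2.length) *
        Dden id (X2 ++ X1) (Y2 ++ Y1) := by
  have h1 := (pairProd_congr_alt (ι := ℂ) (fun b b' => b - b') (by intros; ring)).swap [] X1 X2 []
  have h2 := (pairProd_congr_alt (ι := ℂ) (fun b b' => b' - b) (by intros; ring)).swap [] Y1 Y2 []
  simp only [List.nil_append, List.append_nil] at h1 h2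
  simp only [Dden, id]
  rw [h1, h2, prodLL_swap, pow_add]
  ring

lemma prod_inv_sub (x : ℂ) (L : List ℂ) (hx : x ≠ 0) (hL : ∀ y ∈ L, y ≠ 0) :
    (L.map (fun y => x⁻¹ - y⁻¹)).prod =
      (-1) ^ L.length * (L.map (fun y => x - y)).prod * (x ^ L.length)⁻¹ * L.prod⁻¹ := by
  induction L with
  | nil => simp
  | cons y L ih =>
    have hy : y ≠ 0 := hL y (by simp)
    simp only [List.map_cons, List.prod_cons, List.length_cons]
    rw [ih (fun w hw => hL w (by simp [hw])), mul_inv, pow_succ, pow_succ, mul_inv]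
    have : x⁻¹ - y⁻¹ = (-1) * (x - y) * x⁻¹ * y⁻¹ := by field_simp; ring
    rw [this]
    ring

lemma list_prod_ne_zero (L : List ℂ) (hL : ∀ y ∈ L, y ≠ 0) : L.prod ≠ 0 := by
  intro h
  exact hL 0 (List.prod_eq_zero_iff.1 h) rfl

lemma pairProd_inv (L : List ℂ) (hL : ∀ y ∈ L, y ≠ 0) :
    pairProd (L.map (fun x => x⁻¹)) (fun x y => x - y) =
      (-1) ^ (L.length.choose 2) * L.prod ^ (1 - L.length : ℤ) *
        pairProd L (fun x y => x - y) := by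
  induction L with
  | nil => simp [pairProd_nil]
  | cons x L ih =>
    have hx : x ≠ 0 := hL x (by simp)
    have hL' : ∀ y ∈ L, y ≠ 0 := fun w hw => hL w (by simp [hw])
    have hP := list_prod_ne_zero L hL'
    rw [List.map_cons, pairProd_cons, pairProd_cons, ih hL', List.map_map]
    have := prod_inv_sub x L hx hL'
    simp only [Function.comp_def]
    rw [this, List.length_cons, Nat.choose_succ_succ' L.length 1, pow_add, Nat.choose_one_right,
      List.prod_cons, mul_zpow]
    have e1 : (1 - ((L.length + 1 : ℕ) : ℤ)) = - (L.length : ℤ) := by push_cast; ring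
    have e2 : (1 - (L.length : ℤ)) = - (L.length : ℤ) + 1 := by ring
    rw [e1, e2, zpow_add₀ hP, zpow_one, zpow_neg, zpow_natCast, zpow_neg, zpow_natCast]
    field_simp

lemma pairProd_neg (L : List ℂ) :
    pairProd L (fun x y => y - x) = (-1) ^ (L.length.choose 2) * pairProd L (fun x y => x - y) := by
  induction L with
  | nil => simp [pairProd_nil]
  | cons x L ih =>
    rw [pairProd_cons, pairProd_cons, ih, List.length_cons, Nat.choose_succ_succ' L.length 1,
      pow_add, Nat.choose_one_right]
    have : (L.map (fun y => y - x)).prod = (-1) ^ L.length * (L.map (fun y => x - y)).prod := by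
      clear ih
      induction L with
      | nil => simp
      | cons y L ih =>
        simp only [List.map_cons, List.prod_cons, List.length_cons, ih, pow_succ]
        ring
    rw [this]
    ring

lemma prodLL_inv (X Y : List ℂ) (hX : ∀ y ∈ X, y ≠ 0) (hY : ∀ y ∈ Y, y ≠ 0) :
    prodLL (X.map (fun x => x⁻¹)) (Y.map (fun x => x⁻¹)) (fun x y => x - y) =
      (-1) ^ (X.length * Y.length) * (X.prod ^ Y.length)⁻¹ * (Y.prod ^ X.length)⁻¹ *
        prodLL X Y (fun x y => x - y) := by
  induction X with
  | nil => simp [prodLL]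
  | cons x X ih =>
    have hx : x ≠ 0 := hX x (by simp)
    have := ih (fun w hw => hX w (by simp [hw]))
    rw [prodLL_map] at this ⊢
    simp only [prodLL, List.map_cons, List.prod_cons, List.length_cons] at this ⊢
    rw [this, prod_inv_sub x Y hx hY]
    rw [add_mul, one_mul, pow_add, pow_succ, mul_pow, mul_inv, mul_inv]
    ring

lemma Dden_inv (X Y : List ℂ) (hX : ∀ y ∈ X, y ≠ 0) (hY : ∀ y ∈ Y, y ≠ 0) :
    Dden id (X.map (fun x => x⁻¹)) (Y.map (fun x => x⁻¹)) =
      (-1) ^ (X.length.choose 2 + Y.length.choose 2 + X.length * Y.length) *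
        X.prod ^ (Y.length - X.length + 1 : ℤ) * Y.prod ^ (X.length - Y.length + 1 : ℤ) *
        Dden id X Y := by
  simp only [Dden, id]
  have hPX := list_prod_ne_zero X hX
  have hPY := list_prod_ne_zero Y hY
  rw [pairProd_neg, pairProd_neg, pairProd_inv X hX, pairProd_inv Y hY, prodLL_inv X Y hX hY]
  have e1 : (Y.length - X.length + 1 : ℤ) = Y.length + (1 - X.length) := by ring
  have e2 : (X.length - Y.length + 1 : ℤ) = X.length + (1 - Y.length) := by ring
  rw [e1, e2, zpow_add₀ hPX, zpow_add₀ hPY, zpow_natCast, zpow_natCast, List.length_map, pow_add,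
    pow_add, div_eq_mul_inv, div_eq_mul_inv, mul_inv, mul_inv, mul_inv, inv_inv, inv_inv,
    ← inv_pow (-1 : ℂ)]
  rw [show (-1 : ℂ)⁻¹ = -1 by norm_num]
  ring

lemma Delta_map (z : ι → ℂ) (B1 B2 F : List ι) (R S T1 T2 : List ℤ) (η : ℤ) :
    Delta z B1 B2 F R S T1 T2 η =
      Delta id (B1.map z) (B2.map z) (F.map z) R S T1 T2 η := by
  unfold Delta
  have hr : ((B1.map z).map (Sum.inl : ℂ → ℂ ⊕ (ℂ ⊕ ℤ)) ++
      (B2.map z).map (fun b => (Sum.inr (Sum.inl b) : ℂ ⊕ (ℂ ⊕ ℤ))) ++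
      R.map (fun r => (Sum.inr (Sum.inr r) : ℂ ⊕ (ℂ ⊕ ℤ)))) =
      (B1.map (Sum.inl : ι → ι ⊕ (ι ⊕ ℤ)) ++
      B2.map (fun b => (Sum.inr (Sum.inl b) : ι ⊕ (ι ⊕ ℤ))) ++
      R.map (fun r => (Sum.inr (Sum.inr r) : ι ⊕ (ι ⊕ ℤ)))).map
        (Sum.map z (Sum.map z id)) := by
    simp [List.map_map, Function.comp_def]
  have hc : ((F.map z).map (Sum.inl : ℂ → ℂ ⊕ (ℤ ⊕ (ℤ ⊕ ℤ))) ++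
      S.map (fun j => (Sum.inr (Sum.inl j) : ℂ ⊕ (ℤ ⊕ (ℤ ⊕ ℤ)))) ++
      T1.map (fun j => (Sum.inr (Sum.inr (Sum.inl j)) : ℂ ⊕ (ℤ ⊕ (ℤ ⊕ ℤ)))) ++
      T2.map (fun j => (Sum.inr (Sum.inr (Sum.inr j)) : ℂ ⊕ (ℤ ⊕ (ℤ ⊕ ℤ))))) =
      (F.map (Sum.inl : ι → ι ⊕ (ℤ ⊕ (ℤ ⊕ ℤ))) ++
      S.map (fun j => (Sum.inr (Sum.inl j) : ι ⊕ (ℤ ⊕ (ℤ ⊕ ℤ)))) ++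
      T1.map (fun j => (Sum.inr (Sum.inr (Sum.inl j)) : ι ⊕ (ℤ ⊕ (ℤ ⊕ ℤ)))) ++
      T2.map (fun j => (Sum.inr (Sum.inr (Sum.inr j)) : ι ⊕ (ℤ ⊕ (ℤ ⊕ ℤ))))).map
        (Sum.map z id) := by
    simp [List.map_map, Function.comp_def]
  rw [hr, hc, listDet_map]
  apply listDet_congr
  rintro (b | b | r) - (f | j | j | j) - <;> rfl

lemma IsChi_map (z : ι → ℂ) (B1 B2 F1 F2 : List ι) (χ : ℤ → ℤ → ℂ)
    (h : IsChi z B1 B2 F1 F2 χ) :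
    IsChi id (B1.map z) (B2.map z) (F1.map z) (F2.map z) χ := by
  unfold IsChi at h ⊢
  simp only [Delta_map z, Dden_map z, List.map_append] at h
  simpa only [List.length_map] using h

end dens

section core

def rowsL (X1 X2 : List ℂ) (R : List ℤ) : List (ℂ ⊕ (ℂ ⊕ ℤ)) :=
  X1.map Sum.inl ++ X2.map (fun b => Sum.inr (Sum.inl b)) ++ R.map (fun r => Sum.inr (Sum.inr r))

def colsL (Y : List ℂ) (S T1 T2 : List ℤ) : List (ℂ ⊕ (ℤ ⊕ (ℤ ⊕ ℤ))) :=
  Y.map Sum.inl ++ S.map (fun j => Sum.inr (Sum.inl j)) ++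
    T1.map (fun j => Sum.inr (Sum.inr (Sum.inl j))) ++
    T2.map (fun j => Sum.inr (Sum.inr (Sum.inr j)))

def gE (f1 f2 : ℂ → ℂ → ℂ) (h : ℂ → ℤ → ℂ) (g : ℤ → ℂ → ℂ) :
    ℂ ⊕ (ℂ ⊕ ℤ) → ℂ ⊕ (ℤ ⊕ (ℤ ⊕ ℤ)) → ℂ
  | Sum.inl b, Sum.inl f => f1 b f
  | Sum.inl b, Sum.inr (Sum.inl j) => h b j
  | Sum.inl b, Sum.inr (Sum.inr (Sum.inl j)) => h b j
  | Sum.inl _, Sum.inr (Sum.inr (Sum.inr _)) => 0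
  | Sum.inr (Sum.inl b), Sum.inl f => f2 b f
  | Sum.inr (Sum.inl b), Sum.inr (Sum.inl j) => h b j
  | Sum.inr (Sum.inl _), Sum.inr (Sum.inr (Sum.inl _)) => 0
  | Sum.inr (Sum.inl b), Sum.inr (Sum.inr (Sum.inr j)) => h b j
  | Sum.inr (Sum.inr r), Sum.inl f => g r f
  | Sum.inr (Sum.inr _), Sum.inr _ => 0

lemma Delta_gE (X1 X2 Y : List ℂ) (R S T1 T2 : List ℤ) (η : ℤ) :
    Delta id X1 X2 Y R S T1 T2 η = listDet (rowsL X1 X2 R) (colsL Y S T1 T2)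
      (gE (fun b f => 1 / (b - f)) (fun b f => (-f / b) ^ η / (b - f))
        (fun b j => b ^ (j - 1)) (fun r f => (-f) ^ (r - 1))) := by
  unfold Delta rowsL colsL
  apply listDet_congr
  rintro (b | b | r) - (f | j | j | j) - <;> rfl

lemma Delta_inv_gE (X1 X2 Y : List ℂ) (R S T1 T2 : List ℤ) (η : ℤ) :
    Delta id (X1.map (fun x => x⁻¹)) (X2.map (fun x => x⁻¹)) (Y.map (fun x => x⁻¹)) R S T1 T2 η =
    listDet (rowsL X1 X2 R) (colsL Y S T1 T2)
      (gE (fun b f => 1 / (b⁻¹ - f⁻¹)) (fun b f => (-f⁻¹ / b⁻¹) ^ η / (b⁻¹ - f⁻¹))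
        (fun b j => b⁻¹ ^ (j - 1)) (fun r f => (-f⁻¹) ^ (r - 1))) := by
  rw [← Delta_map]
  unfold Delta rowsL colsL
  apply listDet_congr
  rintro (b | b | r) - (f | j | j | j) - <;> rfl

lemma mem_rowsL (X1 X2 : List ℂ) (R : List ℤ) (x) : x ∈ rowsL X1 X2 R ↔
    (∃ b ∈ X1, x = Sum.inl b) ∨ (∃ b ∈ X2, x = Sum.inr (Sum.inl b)) ∨
      (∃ r ∈ R, x = Sum.inr (Sum.inr r)) := by
  simp [rowsL, eq_comm]

lemma mem_colsL (Y : List ℂ) (S T1 T2 : List ℤ) (x) : x ∈ colsL Y S T1 T2 ↔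
    (∃ f ∈ Y, x = Sum.inl f) ∨ (∃ j ∈ S, x = Sum.inr (Sum.inl j)) ∨
      (∃ j ∈ T1, x = Sum.inr (Sum.inr (Sum.inl j))) ∨
      (∃ j ∈ T2, x = Sum.inr (Sum.inr (Sum.inr j))) := by
  simp [colsL, eq_comm]

def colK (κS κ1 κ2 : ℤ → ℂ → ℂ) : ℂ ⊕ (ℤ ⊕ (ℤ ⊕ ℤ)) → ℂ ⊕ (ℤ ⊕ (ℤ ⊕ ℤ)) → ℂ
  | Sum.inr (Sum.inl j), Sum.inl f => κS j f
  | Sum.inr (Sum.inr (Sum.inl j)), Sum.inl f => κ1 j f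
  | Sum.inr (Sum.inr (Sum.inr j)), Sum.inl f => κ2 j f
  | _, _ => 0

def rowK (l1 l2 : ℂ → ℤ → ℂ) : ℂ ⊕ (ℂ ⊕ ℤ) → ℂ ⊕ (ℂ ⊕ ℤ) → ℂ
  | Sum.inr (Sum.inr r), Sum.inl b => l1 b r
  | Sum.inr (Sum.inr r), Sum.inr (Sum.inl b) => l2 b r
  | _, _ => 0

lemma shift_col (X1 X2 Y : List ℂ) (R S T1 T2 : List ℤ) (f1 f2 : ℂ → ℂ → ℂ)
    (h : ℂ → ℤ → ℂ) (g : ℤ → ℂ → ℂ) (κS κ1 κ2 : ℤ → ℂ → ℂ) :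
    listDet (rowsL X1 X2 R) (colsL Y S T1 T2) (gE f1 f2 h g) =
    listDet (rowsL X1 X2 R) (colsL Y S T1 T2) (gE
      (fun b f => f1 b f + ((S.map fun j => h b j * κS j f).sum +
        (T1.map fun j => h b j * κ1 j f).sum))
      (fun b f => f2 b f + ((S.map fun j => h b j * κS j f).sum +
        (T2.map fun j => h b j * κ2 j f).sum)) h g) := by
  rw [← listDet_colop (rowsL X1 X2 R) (colsL Y S T1 T2) (gE f1 f2 h g) (fun c => c.isLeft = true)
    (colK κS κ1 κ2)]
  · apply listDet_congr
    rintro (b | b | r) - (f | j | j | j) - <;>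
    simp [colsL, gE, colK, List.map_map, Function.comp_def]
  · rintro (f | j | j | j) (f' | j' | j' | j') <;> simp [colK]

lemma shift_row (X1 X2 Y : List ℂ) (R S T1 T2 : List ℤ) (f1 f2 : ℂ → ℂ → ℂ)
    (h : ℂ → ℤ → ℂ) (g : ℤ → ℂ → ℂ) (l1 l2 : ℂ → ℤ → ℂ) :
    listDet (rowsL X1 X2 R) (colsL Y S T1 T2) (gE f1 f2 h g) =
    listDet (rowsL X1 X2 R) (colsL Y S T1 T2) (gE
      (fun b f => f1 b f + (R.map fun r => g r f * l1 b r).sum)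
      (fun b f => f2 b f + (R.map fun r => g r f * l2 b r).sum) h g) := by
  rw [← listDet_rowop (rowsL X1 X2 R) (colsL Y S T1 T2) (gE f1 f2 h g)
    (fun c => ∀ r, c ≠ Sum.inr (Sum.inr r)) (rowK l1 l2)]
  · apply listDet_congr
    rintro (b | b | r) - (f | j | j | j) - <;>
    simp [rowsL, gE, rowK, List.map_map, Function.comp_def]
  · rintro (f | j | j) (f' | j' | j') <;> simp [rowK]

def swR (ρ : ℤ → ℤ) : ℂ ⊕ (ℂ ⊕ ℤ) → ℂ ⊕ (ℂ ⊕ ℤ)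
  | Sum.inl b => Sum.inr (Sum.inl b)
  | Sum.inr (Sum.inl b) => Sum.inl b
  | Sum.inr (Sum.inr r) => Sum.inr (Sum.inr (ρ r))

def swC (τ : ℤ → ℤ) : ℂ ⊕ (ℤ ⊕ (ℤ ⊕ ℤ)) → ℂ ⊕ (ℤ ⊕ (ℤ ⊕ ℤ))
  | Sum.inl f => Sum.inl f
  | Sum.inr (Sum.inl j) => Sum.inr (Sum.inl (τ j))
  | Sum.inr (Sum.inr (Sum.inl j)) => Sum.inr (Sum.inr (Sum.inr (τ j)))
  | Sum.inr (Sum.inr (Sum.inr j)) => Sum.inr (Sum.inr (Sum.inl (τ j)))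

lemma reorder_rows {β : Type*} (X1 X2 : List ℂ) (R : List ℤ) (ρ : ℤ → ℤ) (cols : List β)
    (e : ℂ ⊕ (ℂ ⊕ ℤ) → β → ℂ) :
    listDet (rowsL X2 X1 (R.map ρ).reverse) cols e =
      (-1) ^ (X1.length * X2.length + R.length.choose 2) *
        listDet ((rowsL X1 X2 R).map (swR ρ)) cols e := by
  have ha := alt_rows cols e
  have h1 := ha.swap [] (X2.map Sum.inl) (X1.map (fun b => Sum.inr (Sum.inl b)))
    ((R.map ρ).reverse.map (fun r => Sum.inr (Sum.inr r)))
  have h2 := ha.rev (X1.map (fun b => Sum.inr (Sum.inl b)) ++ X2.map Sum.inl)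
    ((R.map ρ).reverse.map (fun r => Sum.inr (Sum.inr r))) []
  simp only [List.nil_append, List.append_nil, List.append_assoc, List.length_map,
    List.length_reverse, List.map_reverse, List.reverse_reverse, List.map_map] at h1 h2
  have h3 : (rowsL X1 X2 R).map (swR ρ) = X1.map (fun b => Sum.inr (Sum.inl b)) ++
      (X2.map Sum.inl ++ R.map ((fun r => Sum.inr (Sum.inr r)) ∘ ρ)) := by
    simp [rowsL, swR, List.map_map, Function.comp_def]
  rw [h3]
  unfold rowsL
  rw [List.append_assoc, List.map_reverse, List.map_map, h1, h2, pow_add]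
  ring

lemma reorder_cols {α : Type*} (Y1 Y2 : List ℂ) (S T1 T2 : List ℤ) (τ : ℤ → ℤ) (rows : List α)
    (e : α → ℂ ⊕ (ℤ ⊕ (ℤ ⊕ ℤ)) → ℂ) :
    listDet rows (colsL (Y2 ++ Y1) (S.map τ).reverse (T2.map τ).reverse (T1.map τ).reverse) e =
      (-1) ^ (Y1.length * Y2.length + S.length.choose 2 + T1.length.choose 2 + T2.length.choose 2 +
        T1.length * T2.length) *
        listDet rows ((colsL (Y1 ++ Y2) S T1 T2).map (swC τ)) e := by
  have ha := alt_cols rows e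
  set y1 : List (ℂ ⊕ (ℤ ⊕ (ℤ ⊕ ℤ))) := Y1.map Sum.inl with hy1
  set y2 : List (ℂ ⊕ (ℤ ⊕ (ℤ ⊕ ℤ))) := Y2.map Sum.inl with hy2
  set s : List (ℂ ⊕ (ℤ ⊕ (ℤ ⊕ ℤ))) := S.map (fun j => Sum.inr (Sum.inl (τ j))) with hs
  set t1 : List (ℂ ⊕ (ℤ ⊕ (ℤ ⊕ ℤ))) := T1.map (fun j => Sum.inr (Sum.inr (Sum.inr (τ j)))) with ht1
  set t2 : List (ℂ ⊕ (ℤ ⊕ (ℤ ⊕ ℤ))) := T2.map (fun j => Sum.inr (Sum.inr (Sum.inl (τ j)))) with ht2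
  have h1 := ha.swap [] y2 y1 (s.reverse ++ (t2.reverse ++ t1.reverse))
  have h2 := ha.rev (y1 ++ y2) s.reverse (t2.reverse ++ t1.reverse)
  have h3 := ha.rev (y1 ++ (y2 ++ s)) t2.reverse t1.reverse
  have h4 := ha.rev (y1 ++ (y2 ++ (s ++ t2))) t1.reverse []
  have h5 := ha.swap (y1 ++ (y2 ++ s)) t2 t1 []
  simp only [List.nil_append, List.append_nil, List.append_assoc, List.length_reverse,
    List.reverse_reverse] at h1 h2 h3 h4 h5
  have e1 : (colsL (Y1 ++ Y2) S T1 T2).map (swC τ) = y1 ++ (y2 ++ (s ++ (t1 ++ t2))) := by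
    simp [colsL, swC, List.map_map, Function.comp_def, hy1, hy2, hs, ht1, ht2]
  have e2 : colsL (Y2 ++ Y1) (S.map τ).reverse (T2.map τ).reverse (T1.map τ).reverse =
      y2 ++ (y1 ++ (s.reverse ++ (t2.reverse ++ t1.reverse))) := by
    simp [colsL, List.map_map, Function.comp_def, hy1, hy2, hs, ht1, ht2]
  rw [e1, e2, h1, h2, h3, h4, h5]
  simp only [hy1, hy2, hs, ht1, ht2, List.length_map, pow_add, mul_comm Y2.length,
    mul_comm T2.length]
  ring

end core

section transform

lemma prod_map_const_mul_zpow (u : ℂ) (c : ℤ) (X : List ℂ) :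
    (X.map (fun b => u * b ^ c)).prod = u ^ X.length * X.prod ^ c := by
  induction X with
  | nil => simp
  | cons x X ih =>
    simp only [List.map_cons, List.prod_cons, List.length_cons, ih, mul_zpow, pow_succ]
    ring

lemma prod_map_neg_zpow (d : ℤ) (X : List ℂ) :
    (X.map (fun b => (-b) ^ d)).prod = (X.map (fun b => -b)).prod ^ d := by
  induction X with
  | nil => simp
  | cons x X ih =>
    simp only [List.map_cons, List.prod_cons, ih, mul_zpow]

lemma prod_map_neg (X : List ℂ) :
    (X.map (fun b => -b)).prod = (-1) ^ X.length * X.prod := by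
  induction X with
  | nil => simp
  | cons x X ih =>
    simp only [List.map_cons, List.prod_cons, ih, List.length_cons, pow_succ]
    ring

lemma m1_zpow_mul_self (P : ℤ) : (-1 : ℂ) ^ P * (-1) ^ P = 1 := by
  rw [← mul_zpow]; simp

lemma m1_zpow_eq {A B : ℤ} (h : ∃ c, A - B = 2 * c) : (-1 : ℂ) ^ A = (-1) ^ B := by
  obtain ⟨c, hc⟩ := h
  have : A = B + 2 * c := by omega
  rw [this, zpow_add₀ (by norm_num), zpow_mul]
  norm_num

noncomputable def scR (P Q c : ℤ) : ℂ ⊕ (ℂ ⊕ ℤ) → ℂ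
  | Sum.inl b => (-1) ^ P * b ^ c
  | Sum.inr (Sum.inl b) => (-1) ^ Q * b ^ c
  | Sum.inr (Sum.inr _) => 1

noncomputable def scC (P Q d : ℤ) : ℂ ⊕ (ℤ ⊕ (ℤ ⊕ ℤ)) → ℂ
  | Sum.inl f => (-f) ^ d
  | Sum.inr (Sum.inl _) => (-1) ^ P
  | Sum.inr (Sum.inr (Sum.inl _)) => (-1) ^ P
  | Sum.inr (Sum.inr (Sum.inr _)) => (-1) ^ Q

lemma prod_scR (P Q c : ℤ) (X1 X2 : List ℂ) (R : List ℤ) :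
    ((rowsL X1 X2 R).map (scR P Q c)).prod =
      (-1) ^ (P * X1.length + Q * X2.length) * (X2 ++ X1).prod ^ c := by
  have : ((rowsL X1 X2 R).map (scR P Q c)).prod =
      (X1.map (fun b => (-1) ^ P * b ^ c)).prod * (X2.map (fun b => (-1) ^ Q * b ^ c)).prod := by
    simp [rowsL, List.map_map, Function.comp_def, scR]
  rw [this, prod_map_const_mul_zpow, prod_map_const_mul_zpow, List.prod_append, mul_zpow,
    zpow_add₀ (by norm_num), zpow_mul, zpow_mul, zpow_natCast, zpow_natCast]
  ring

lemma prod_scC (P Q d : ℤ) (Y1 Y2 : List ℂ) (S T1 T2 : List ℤ) :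
    ((colsL (Y1 ++ Y2) S T1 T2).map (scC P Q d)).prod =
      (-1) ^ (P * S.length + P * T1.length + Q * T2.length) *
        ((Y2 ++ Y1).map (fun f => -f)).prod ^ d := by
  have : ((colsL (Y1 ++ Y2) S T1 T2).map (scC P Q d)).prod =
      (Y1.map (fun f => (-f) ^ d)).prod * (Y2.map (fun f => (-f) ^ d)).prod *
        ((-1) ^ P) ^ S.length * ((-1) ^ P) ^ T1.length * ((-1) ^ Q) ^ T2.length := by
    simp [colsL, List.map_map, Function.comp_def, scC]
    ring
  rw [this, prod_map_neg_zpow, prod_map_neg_zpow, List.map_append, List.prod_append, mul_zpow,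
    zpow_add₀ (by norm_num), zpow_add₀ (by norm_num), zpow_mul, zpow_mul, zpow_mul, zpow_natCast,
    zpow_natCast, zpow_natCast]
  ring

lemma core (X1 X2 Y1 Y2 : List ℂ) (R S T1 T2 : List ℤ) (P Q c d η η' : ℤ)
    (hX1 : ∀ b ∈ X1, b ≠ 0) (hX2 : ∀ b ∈ X2, b ≠ 0) (hY : ∀ f ∈ Y1 ++ Y2, f ≠ 0)
    (hS : S = [] ∨ P = Q) (κS κ1 κ2 : ℤ → ℂ → ℂ) (l1 l2 : ℂ → ℤ → ℂ)
    (H1 : ∀ b ∈ X1, ∀ f ∈ Y1 ++ Y2,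
      1 / (b⁻¹ - f⁻¹) + ((S.map fun j => b⁻¹ ^ (j - 1) * κS j f).sum +
        (T1.map fun j => b⁻¹ ^ (j - 1) * κ1 j f).sum) +
        (R.map fun r => (-f⁻¹) ^ (r - 1) * l1 b r).sum =
      ((-1) ^ P * b ^ c) * ((-f) ^ d * ((-f / b) ^ η' / (b - f))))
    (H2 : ∀ b ∈ X2, ∀ f ∈ Y1 ++ Y2,
      (-f⁻¹ / b⁻¹) ^ η / (b⁻¹ - f⁻¹) + ((S.map fun j => b⁻¹ ^ (j - 1) * κS j f).sum +
        (T2.map fun j => b⁻¹ ^ (j - 1) * κ2 j f).sum) +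
        (R.map fun r => (-f⁻¹) ^ (r - 1) * l2 b r).sum =
      ((-1) ^ Q * b ^ c) * ((-f) ^ d * (1 / (b - f)))) :
    Delta id (X1.map (fun x => x⁻¹)) (X2.map (fun x => x⁻¹)) ((Y1 ++ Y2).map (fun x => x⁻¹))
      R S T1 T2 η =
    (-1) ^ (P * X1.length + Q * X2.length + (P * S.length + P * T1.length + Q * T2.length) +
      ((X1.length * X2.length + R.length.choose 2 : ℕ) : ℤ) +
      ((Y1.length * Y2.length + S.length.choose 2 + T1.length.choose 2 + T2.length.choose 2 +
        T1.length * T2.length : ℕ) : ℤ)) *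
      (X2 ++ X1).prod ^ c * ((Y2 ++ Y1).map (fun f => -f)).prod ^ d *
      Delta id X2 X1 (Y2 ++ Y1) (R.map (fun r => 2 - d - r)).reverse
        (S.map (fun r => 2 - c - r)).reverse (T2.map (fun r => 2 - c - r)).reverse
        (T1.map (fun r => 2 - c - r)).reverse η' := by
  rw [Delta_inv_gE, shift_col _ _ _ _ _ _ _ _ _ _ _ κS κ1 κ2,
    shift_row _ _ _ _ _ _ _ _ _ _ _ l1 l2, Delta_gE X2, reorder_rows, reorder_cols, listDet_map]
  set e := gE (fun b f => 1 / (b - f)) (fun b f => (-f / b) ^ η' / (b - f))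
        (fun b j => b ^ (j - 1)) (fun r f => (-f) ^ (r - 1)) with he
  have key : ∀ b : ℂ, b ≠ 0 → ∀ j : ℤ, b⁻¹ ^ (j - 1) = b ^ c * b ^ (2 - c - j - 1) := by
    intro b hb j
    rw [← zpow_add₀ hb, inv_zpow', show c + (2 - c - j - 1) = -(j - 1) by ring]
  have key2 : ∀ f : ℂ, f ≠ 0 → ∀ j : ℤ, (-f⁻¹) ^ (j - 1) = (-f) ^ d * (-f) ^ (2 - d - j - 1) := by
    intro f hf j
    rw [← zpow_add₀ (neg_ne_zero.2 hf), show -f⁻¹ = (-f)⁻¹ by rw [inv_neg], inv_zpow',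
      show d + (2 - d - j - 1) = -(j - 1) by ring]
  have sg := m1_zpow_mul_self
  rw [listDet_congr _ _ _ (fun r c' => scR P Q c r * (scC P Q d c' *
    e (swR (fun r => 2 - d - r) r) (swC (fun r => 2 - c - r) c')))]
  · rw [listDet_row_scale, listDet_col_scale, prod_scR, prod_scC]
    have hm : (-1 : ℂ) ≠ 0 := by norm_num
    rw [zpow_add₀ hm _ ((Y1.length * Y2.length + S.length.choose 2 + T1.length.choose 2 +
        T2.length.choose 2 + T1.length * T2.length : ℕ) : ℤ), zpow_natCast,
      zpow_add₀ hm _ ((X1.length * X2.length + R.length.choose 2 : ℕ) : ℤ), zpow_natCast,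
      zpow_add₀ hm (P * X1.length + Q * X2.length)]
    have s1 : ∀ n : ℕ, ((-1 : ℂ) ^ n) * (-1) ^ n = 1 := by
      intro n; rw [← mul_pow]; simp
    generalize listDet (rowsL X1 X2 R) _ _ = D
    have a1 := s1 (X1.length * X2.length + R.length.choose 2)
    have a2 := s1 (Y1.length * Y2.length + S.length.choose 2 + T1.length.choose 2 +
        T2.length.choose 2 + T1.length * T2.length)
    generalize (-1 : ℂ) ^ (X1.length * X2.length + R.length.choose 2) = w1 at *
    generalize (-1 : ℂ) ^ (Y1.length * Y2.length + S.length.choose 2 + T1.length.choose 2 +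
        T2.length.choose 2 + T1.length * T2.length) = w2 at *
    generalize (X2 ++ X1).prod ^ c = u1
    generalize ((Y2 ++ Y1).map (fun f => -f)).prod ^ d = u2
    generalize (-1 : ℂ) ^ (P * ↑X1.length + Q * ↑X2.length) = u3
    generalize (-1 : ℂ) ^ (P * ↑S.length + P * ↑T1.length + Q * ↑T2.length) = u4
    linear_combination (-(u1 * u2 * u3 * u4 * D)) * a1 - (u1 * u2 * u3 * u4 * D * w1 * w1) * a2
  · intro r hr c' hc'
    rw [mem_rowsL] at hr
    rw [mem_colsL] at hc'
    rcases hr with ⟨b, hb, rfl⟩ | ⟨b, hb, rfl⟩ | ⟨r, hr, rfl⟩ <;>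
    rcases hc' with ⟨f, hf, rfl⟩ | ⟨j, hj, rfl⟩ | ⟨j, hj, rfl⟩ | ⟨j, hj, rfl⟩ <;>
    simp only [gE, he, swR, swC, scR, scC, mul_zero]
    · exact H1 b hb f hf
    · rw [key b (hX1 b hb)]
      linear_combination (-(b ^ c * b ^ (2 - c - j - 1))) * sg P
    · rw [key b (hX1 b hb)]
      linear_combination (-(b ^ c * b ^ (2 - c - j - 1))) * sg P
    · exact H2 b hb f hf
    · rw [key b (hX2 b hb)]
      rcases hS with rfl | rfl
      · simp at hj
      · linear_combination (-(b ^ c * b ^ (2 - c - j - 1))) * sg P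
    · rw [key b (hX2 b hb)]
      linear_combination (-(b ^ c * b ^ (2 - c - j - 1))) * sg Q
    · rw [key2 f (hY f hf), one_mul]

lemma combine (X1 X2 Y1 Y2 : List ℂ) (hX : ∀ b ∈ X1 ++ X2, b ≠ 0) (hY : ∀ f ∈ Y1 ++ Y2, f ≠ 0)
    (a G k : ℤ) (hk : k = X1.length + X2.length - (Y1.length + Y2.length)) (Dl Dh : ℂ)
    (h : Dl = (-1) ^ G * (X2 ++ X1).prod ^ (a - k + 1) *
      ((Y2 ++ Y1).map (fun f => -f)).prod ^ (1 - a + k) * Dh) :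
    Dl / Dden id ((X1 ++ X2).map (fun x => x⁻¹)) ((Y1 ++ Y2).map (fun x => x⁻¹)) =
      (-1) ^ (G + (((X1.length + X2.length).choose 2 + (Y1.length + Y2.length).choose 2 +
        X1.length * X2.length + Y1.length * Y2.length : ℕ) : ℤ)) *
      (((X2 ++ X1).prod / ((Y2 ++ Y1).map (fun f => -f)).prod) ^ a *
        (Dh / Dden id (X2 ++ X1) (Y2 ++ Y1))) := by
  have hX' : (X2 ++ X1).prod ≠ 0 := list_prod_ne_zero _ (by
    intro y hy; apply hX; simp at hy ⊢; tauto)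
  have hYp : (Y2 ++ Y1).prod ≠ 0 := list_prod_ne_zero _ (by
    intro y hy; apply hY; simp at hy ⊢; tauto)
  rw [Dden_inv _ _ hX hY, Dden_swap, h, prod_map_neg]
  have e1 : (X1 ++ X2).prod = (X2 ++ X1).prod := by simp [mul_comm]
  have e2 : (Y1 ++ Y2).prod = (Y2 ++ Y1).prod := by simp [mul_comm]
  rw [e1, e2]
  set x := (X2 ++ X1).prod
  set y := (Y2 ++ Y1).prod
  set D := Dden id (X2 ++ X1) (Y2 ++ Y1)
  simp only [List.length_append]
  push_cast
  set m1 := X1.length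
  set m2 := X2.length
  set n1 := Y1.length
  set n2 := Y2.length
  have q1 : ((n1 : ℤ) + n2 - (m1 + m2) + 1) = 1 - k := by rw [hk]; ring
  have q2 : ((m1 : ℤ) + m2 - (n1 + n2) + 1) = 1 + k := by rw [hk]; ring
  rw [q1, q2]
  have r1 : x ^ (a - k + 1) = x ^ a * x ^ (1 - k) := by
    rw [← zpow_add₀ hX']; congr 1; ring
  have hm : (-1 : ℂ) ≠ 0 := by norm_num
  have hyn : (-1 : ℂ) ^ (n2 + n1) * y ≠ 0 := mul_ne_zero (pow_ne_zero _ hm) hYp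
  have r2 : ((-1 : ℂ) ^ (n2 + n1) * y) ^ (1 - a + k) =
      (((-1 : ℂ) ^ (n2 + n1) * y) ^ a)⁻¹ * ((-1) ^ (((n2 : ℤ) + n1) * (1 + k)) * y ^ (1 + k)) := by
    rw [show 1 - a + k = -a + (1 + k) by ring, zpow_add₀ hyn, zpow_neg, mul_zpow _ y (1 + k),
      zpow_mul, ← zpow_natCast (-1) (n2 + n1)]
    push_cast; rfl
  rw [r1, r2, div_zpow]
  set y' := ((-1 : ℂ) ^ (n2 + n1) * y) ^ a
  have hx1 : x ^ (1 - k) ≠ 0 := zpow_ne_zero _ hX'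
  have hy1 : y ^ (1 + k) ≠ 0 := zpow_ne_zero _ hYp
  have sgn : (-1 : ℂ) ^ G * (-1) ^ (((n2 : ℤ) + n1) * (1 + k)) =
      (-1) ^ (G + ((((m1 + m2).choose 2 : ℕ) : ℤ) + (((n1 + n2).choose 2 : ℕ) : ℤ) +
        m1 * m2 + n1 * n2)) *
      ((-1) ^ ((m1 + m2).choose 2 + (n1 + n2).choose 2 + (m1 + m2) * (n1 + n2)) *
       (-1) ^ (m1 * m2 + n1 * n2)) := by
    rw [← pow_add, ← zpow_natCast, ← zpow_add₀ hm, ← zpow_add₀ hm]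
    apply m1_zpow_eq
    push_cast
    rw [hk]
    obtain ⟨t, ht⟩ := Int.even_mul_pred_self ((n1 : ℤ) + n2)
    refine ⟨-(((m1 + m2).choose 2 : ℕ) : ℤ) - (((n1 + n2).choose 2 : ℕ) : ℤ) - m1 * m2 - n1 * n2
      - t, ?_⟩
    linear_combination (-1) * ht
  generalize (-1 : ℂ) ^ G = g at *
  generalize (-1 : ℂ) ^ (((n2 : ℤ) + n1) * (1 + k)) = g2 at *
  generalize (-1 : ℂ) ^ (G + ((((m1 + m2).choose 2 : ℕ) : ℤ) + (((n1 + n2).choose 2 : ℕ) : ℤ) +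
        m1 * m2 + n1 * n2)) = g3 at *
  have hw1 : (-1 : ℂ) ^ ((m1 + m2).choose 2 + (n1 + n2).choose 2 + (m1 + m2) * (n1 + n2)) ≠ 0 :=
    pow_ne_zero _ hm
  have hw2 : (-1 : ℂ) ^ (m1 * m2 + n1 * n2) ≠ 0 := pow_ne_zero _ hm
  generalize (-1 : ℂ) ^ ((m1 + m2).choose 2 + (n1 + n2).choose 2 + (m1 + m2) * (n1 + n2)) = w1 at *
  generalize (-1 : ℂ) ^ (m1 * m2 + n1 * n2) = w2 at *
  generalize x ^ (1 - k) = u1 at *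
  generalize y ^ (1 + k) = u2 at *
  have : g * (x ^ a * u1) * (y'⁻¹ * (g2 * u2)) * Dh / (w1 * u1 * u2 * (w2 * D)) =
     (g * g2) * (w1⁻¹ * w2⁻¹) * (u1 * u1⁻¹) * (u2 * u2⁻¹) * (x ^ a / y' * (Dh / D)) := by
    simp only [div_eq_mul_inv, mul_inv]; ring
  rw [this, sgn, mul_inv_cancel₀ hx1, mul_inv_cancel₀ hy1]
  field_simp

end transform

section families

lemma seg_eq (a b : ℤ) :
    seg a b = (List.range (b - a + 1).toNat).map (fun k : ℕ => a + (k : ℤ)) := by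
  have : ∀ L : List ℕ, (L >>= fun a => pure (a : ℤ) : List ℤ) = L.map (fun k : ℕ => (k : ℤ)) := by
    intro L
    induction L with
    | nil => rfl
    | cons x L ih => simp_all
  unfold seg
  rw [this, List.map_map]
  rfl

lemma seg_length (a b : ℤ) : (seg a b).length = (b - a + 1).toNat := by simp [seg_eq]

lemma mem_seg (a b x : ℤ) : x ∈ seg a b ↔ a ≤ x ∧ x ≤ b := by
  simp only [seg_eq, List.mem_map, List.mem_range]
  constructor
  · rintro ⟨k, hk, rfl⟩; omega
  · rintro ⟨h1, h2⟩; exact ⟨(x - a).toNat, by omega, by omega⟩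

lemma seg_nil (a b : ℤ) (h : b < a) : seg a b = [] := by
  rw [← List.length_eq_zero_iff, seg_length]; omega

lemma seg_reflect (a b c : ℤ) : ((seg a b).map (fun r => c - r)).reverse = seg (c - b) (c - a) := by
  apply List.ext_getElem
  · simp only [List.length_reverse, List.length_map, seg_length]; omega
  · intro i h1 h2
    simp only [List.length_reverse, List.length_map, seg_length] at h1
    simp [seg_eq]
    omega

noncomputable def phi (b f : ℂ) (t : ℤ) : ℂ := f ^ (1 + t) * b ^ (1 - t) / (b - f)

lemma phi_step (b f : ℂ) (hb : b ≠ 0) (hf : f ≠ 0) (hbf : b ≠ f) (t : ℤ) :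
    phi b f t = phi b f (t + 1) + f ^ (t + 1) * b ^ (1 - (t + 1)) := by
  have h : b - f ≠ 0 := sub_ne_zero.2 hbf
  unfold phi
  rw [show 1 + (t + 1) = (t + 1) + 1 by ring, zpow_add_one₀ hf (t + 1),
    show 1 - t = (1 - (t + 1)) + 1 by ring, zpow_add_one₀ hb (1 - (t + 1)), add_comm 1 t]
  field_simp
  ring

lemma geo_nat (b f : ℂ) (hb : b ≠ 0) (hf : f ≠ 0) (hbf : b ≠ f) (t : ℤ) (n : ℕ) :
    phi b f t = phi b f (t + n) +
      ((List.range n).map (fun k : ℕ => f ^ (t + 1 + (k : ℤ)) * b ^ (1 - (t + 1 + (k : ℤ))))).sum := by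
  induction n with
  | zero => simp
  | succ n ih =>
    rw [ih, phi_step b f hb hf hbf (t + n), List.range_succ]
    simp only [List.map_append, List.sum_append, List.map_cons, List.map_nil, List.sum_cons,
      List.sum_nil, add_zero]
    push_cast
    rw [show t + (n : ℤ) + 1 = t + (n + 1) by ring, show t + 1 + (n : ℤ) = t + (n + 1) by ring]
    ring

lemma geo_seg (b f : ℂ) (hb : b ≠ 0) (hf : f ≠ 0) (hbf : b ≠ f) (t u : ℤ) (h : t ≤ u) :
    phi b f t = phi b f u + ((seg (t + 1) u).map (fun j => f ^ j * b ^ (1 - j))).sum := by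
  rw [geo_nat b f hb hf hbf t (u - t).toNat, seg_eq, List.map_map]
  rw [show t + ((u - t).toNat : ℤ) = u by omega, show u - (t + 1) + 1 = u - t by ring]
  rfl

lemma phi_swap (b f : ℂ) (t : ℤ) : phi f b t = - phi b f (-t) := by
  unfold phi
  rw [← neg_sub b f, div_neg, sub_neg_eq_add, ← sub_eq_add_neg]
  ring

lemma geo (b f : ℂ) (hb : b ≠ 0) (hf : f ≠ 0) (hbf : b ≠ f) (t u : ℤ) :
    -phi b f u = -phi b f t + ((seg (t + 1) u).map (fun j => f ^ j * b ^ (1 - j))).sum -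
      ((seg (1 - t) (-u)).map (fun r => b ^ r * f ^ (1 - r))).sum := by
  rcases le_total t u with h | h
  · have h2 : ((seg (1 - t) (-u)).map (fun r => b ^ r * f ^ (1 - r))).sum = 0 := by
      rw [seg_nil _ _ (by omega)]; rfl
    rw [geo_seg b f hb hf hbf t u h, h2]; ring
  · have h2 : ((seg (t + 1) u).map (fun j => f ^ j * b ^ (1 - j))).sum = 0 := by
      rw [seg_nil _ _ (by omega)]; rfl
    have h3 := geo_seg f b hf hb hbf.symm (-t) (-u) (by omega)
    rw [phi_swap b f, phi_swap b f, neg_neg, neg_neg, show -t + 1 = 1 - t by ring] at h3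
    rw [h2]; linear_combination (-1) * h3

lemma inv_phi (b f : ℂ) (hb : b ≠ 0) (hf : f ≠ 0) (hbf : b ≠ f) (η : ℤ) :
    (-f⁻¹ / b⁻¹) ^ η / (b⁻¹ - f⁻¹) = (-1) ^ η * -phi b f (-η) := by
  have h : b - f ≠ 0 := sub_ne_zero.2 hbf
  have h' : f - b ≠ 0 := sub_ne_zero.2 hbf.symm
  have h1 : (-f⁻¹ / b⁻¹) = (-1) * (f⁻¹ * b) := by field_simp
  have h2 : (b⁻¹ - f⁻¹) = - ((b - f) * (b⁻¹ * f⁻¹)) := by field_simp; ring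
  rw [h1, h2, mul_zpow, mul_zpow, inv_zpow', phi, zpow_add₀ hf, sub_neg_eq_add, zpow_add₀ hb,
    zpow_one, zpow_one]
  field_simp

lemma inv_phi0 (b f : ℂ) (hb : b ≠ 0) (hf : f ≠ 0) (hbf : b ≠ f) :
    1 / (b⁻¹ - f⁻¹) = -phi b f 0 := by
  simpa using inv_phi b f hb hf hbf 0

lemma rhs_phi (b f : ℂ) (hb : b ≠ 0) (hf : f ≠ 0) (P c d η' E u : ℤ)
    (h1 : d + η' = 1 + u) (h2 : c - η' = 1 - u) (h3 : ∃ x, P + (1 + u) - (1 + E) = 2 * x) :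
    ((-1) ^ P * b ^ c) * ((-f) ^ d * ((-f / b) ^ η' / (b - f))) = (-1) ^ E * -phi b f u := by
  have e1 : (-f / b) ^ η' = (-f) ^ η' * b ^ (-η') := by
    rw [div_zpow, zpow_neg, div_eq_mul_inv]
  have e2 : (-f) ^ (1 + u) = (-1) ^ (1 + u) * f ^ (1 + u) := by
    rw [neg_eq_neg_one_mul, mul_zpow]
  have e3 : (-1 : ℂ) ^ P * (-1) ^ (1 + u) = - (-1) ^ E := by
    have : - (-1 : ℂ) ^ E = (-1) ^ (1 + E) := by
      rw [zpow_add₀ (by norm_num)]; simp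
    rw [this, ← zpow_add₀ (by norm_num)]
    exact m1_zpow_eq h3
  have e4 : b ^ c * b ^ (-η') = b ^ (1 - u) := by
    rw [← zpow_add₀ hb, ← h2]; rfl
  have e5 : (-f) ^ d * (-f) ^ η' = (-f) ^ (1 + u) := by
    rw [← zpow_add₀ (neg_ne_zero.2 hf), h1]
  calc _ = (-1) ^ P * ((-f) ^ d * (-f) ^ η') * (b ^ c * b ^ (-η')) / (b - f) := by rw [e1]; ring
    _ = ((-1) ^ P * (-1) ^ (1 + u)) * f ^ (1 + u) * b ^ (1 - u) / (b - f) := by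
      rw [e4, e5, e2]; ring
    _ = _ := by rw [e3, phi]; ring

lemma colterm (b f : ℂ) (j : ℤ) : b⁻¹ ^ (j - 1) * f ^ j = f ^ j * b ^ (1 - j) := by
  rw [inv_zpow', neg_sub, mul_comm]

lemma rowterm (b f : ℂ) (r : ℤ) :
    (-f⁻¹) ^ (r - 1) * ((-1) ^ r * b ^ r) = - (b ^ r * f ^ (1 - r)) := by
  have : (-f⁻¹) = (-1) * f⁻¹ := by ring
  rw [this, mul_zpow, inv_zpow', neg_sub]
  have h : (-1 : ℂ) ^ (r - 1) * (-1) ^ r = -1 := by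
    rw [← zpow_add₀ (by norm_num)]
    rw [m1_zpow_eq (B := 1) ⟨r - 1, by ring⟩]; simp
  linear_combination (f ^ (1 - r) * b ^ r) * h

lemma sum_map_neg (L : List ℤ) (u : ℤ → ℂ) : (L.map (fun r => - u r)).sum = - (L.map u).sum := by
  induction L with
  | nil => simp
  | cons x L ih => simp only [List.map_cons, List.sum_cons, ih]; ring

lemma sum_map_mul (L : List ℤ) (s : ℂ) (u : ℤ → ℂ) :
    (L.map (fun r => s * u r)).sum = s * (L.map u).sum := by
  induction L with
  | nil => simp
  | cons x L ih => simp only [List.map_cons, List.sum_cons, ih]; ring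

lemma famA (X1 X2 Y1 Y2 : List ℂ) (hX1 : ∀ b ∈ X1, b ≠ 0) (hX2 : ∀ b ∈ X2, b ≠ 0)
    (hY : ∀ f ∈ Y1 ++ Y2, f ≠ 0)
    (hd1 : ∀ b ∈ X1, ∀ f ∈ Y1 ++ Y2, b ≠ f) (hd2 : ∀ b ∈ X2, ∀ f ∈ Y1 ++ Y2, b ≠ f)
    (p q a : ℤ) (ha : 0 ≤ a) :
    Delta id (X1.map (fun x => x⁻¹)) (X2.map (fun x => x⁻¹)) ((Y1 ++ Y2).map (fun x => x⁻¹))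
      (seg 1 (-p) ++ seg (a - p + 1) (a - p - q)) [] (seg 1 p) (seg (p - a + 1) (p + q - a)) (a - p) =
    (-1) ^ (p * X1.length + q * X2.length + (p * p.toNat + q * q.toNat) +
      ((X1.length * X2.length + ((-p).toNat + (-q).toNat).choose 2 : ℕ) : ℤ) +
      ((Y1.length * Y2.length + p.toNat.choose 2 + q.toNat.choose 2 +
        p.toNat * q.toNat : ℕ) : ℤ)) *
      (X2 ++ X1).prod ^ (a - (p + q) + 1) *
      ((Y2 ++ Y1).map (fun f => -f)).prod ^ (1 - a + (p + q)) *
      Delta id X2 X1 (Y2 ++ Y1) (seg 1 (-q) ++ seg (a - q + 1) (a - q - p)) [] (seg 1 q)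
        (seg (q - a + 1) (q + p - a)) (a - q) := by
  have hc := core X1 X2 Y1 Y2 (seg 1 (-p) ++ seg (a - p + 1) (a - p - q)) [] (seg 1 p)
    (seg (p - a + 1) (p + q - a)) p q (a - (p + q) + 1) (1 - a + (p + q)) (a - p) (a - q)
    hX1 hX2 hY (Or.inl rfl) (fun _ _ => 0) (fun j f => f ^ j) (fun j f => (-1) ^ (a - p) * f ^ j)
    (fun b r => if r ≤ -p then (-1) ^ r * b ^ r else 0)
    (fun b r => if r ≤ -p then 0 else (-1) ^ (a - p) * ((-1) ^ r * b ^ r)) ?_ ?_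
  · rw [hc]
    have g1 : ((seg 1 (-p) ++ seg (a - p + 1) (a - p - q)).map
        (fun r => 2 - (1 - a + (p + q)) - r)).reverse =
        seg 1 (-q) ++ seg (a - q + 1) (a - q - p) := by
      rw [List.map_append, List.reverse_append, seg_reflect, seg_reflect]
      congr 2 <;> ring
    have g2 : ((seg (p - a + 1) (p + q - a)).map (fun r => 2 - (a - (p + q) + 1) - r)).reverse =
        seg 1 q := by
      rw [seg_reflect]; congr 1 <;> ring
    have g3 : ((seg 1 p).map (fun r => 2 - (a - (p + q) + 1) - r)).reverse =
        seg (q - a + 1) (q + p - a) := by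
      rw [seg_reflect]; congr 1 <;> ring
    rw [g1, g2, g3]
    have l1 : (seg 1 p).length = p.toNat := by rw [seg_length]; congr 1; ring
    have l2 : (seg (p - a + 1) (p + q - a)).length = q.toNat := by rw [seg_length]; congr 1; ring
    have l3 : (seg 1 (-p) ++ seg (a - p + 1) (a - p - q)).length = (-p).toNat + (-q).toNat := by
      rw [List.length_append, seg_length, seg_length]; congr 2 <;> ring
    rw [l1, l2, l3]
    simp
  · intro b hb f hf
    have hb0 := hX1 b hb
    have hf0 := hY f hf
    have hbf := hd1 b hb f hf
    rw [inv_phi0 b f hb0 hf0 hbf, rhs_phi b f hb0 hf0 p _ _ _ 0 p (by ring) (by ring)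
      ⟨p, by ring⟩, geo b f hb0 hf0 hbf 0 p, List.map_append, List.sum_append]
    have s1 : (seg 1 (-p)).map (fun r => (-f⁻¹) ^ (r - 1) *
        if r ≤ -p then (-1) ^ r * b ^ r else 0) =
        (seg 1 (-p)).map (fun r => - (b ^ r * f ^ (1 - r))) := by
      apply List.map_congr_left
      intro r hr
      rw [mem_seg] at hr
      rw [if_pos hr.2, rowterm]
    have s2 : (seg (a - p + 1) (a - p - q)).map (fun r => (-f⁻¹) ^ (r - 1) *
        if r ≤ -p then (-1) ^ r * b ^ r else 0) =
        (seg (a - p + 1) (a - p - q)).map (fun r => 0) := by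
      apply List.map_congr_left
      intro r hr
      rw [mem_seg] at hr
      rw [if_neg (by omega), mul_zero]
    rw [s1, s2, sum_map_neg]
    simp only [colterm]
    simp
    ring
  · intro b hb f hf
    have hb0 := hX2 b hb
    have hf0 := hY f hf
    have hbf := hd2 b hb f hf
    have hr := rhs_phi b f hb0 hf0 q (a - (p + q) + 1) (1 - a + (p + q)) 0 (a - p) (p + q - a)
      (by ring) (by ring) ⟨q + p - a, by ring⟩
    rw [zpow_zero] at hr
    rw [hr, inv_phi b f hb0 hf0 hbf, geo b f hb0 hf0 hbf (-(a - p)) (p + q - a),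
      List.map_append, List.sum_append]
    have s1 : (seg 1 (-p)).map (fun r => (-f⁻¹) ^ (r - 1) *
        if r ≤ -p then 0 else (-1) ^ (a - p) * ((-1) ^ r * b ^ r)) =
        (seg 1 (-p)).map (fun r => 0) := by
      apply List.map_congr_left
      intro r hr
      rw [mem_seg] at hr
      rw [if_pos hr.2, mul_zero]
    have s2 : (seg (a - p + 1) (a - p - q)).map (fun r => (-f⁻¹) ^ (r - 1) *
        if r ≤ -p then 0 else (-1) ^ (a - p) * ((-1) ^ r * b ^ r)) =
        (seg (a - p + 1) (a - p - q)).map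
          (fun r => (-1) ^ (a - p) * (- (b ^ r * f ^ (1 - r)))) := by
      apply List.map_congr_left
      intro r hr
      rw [mem_seg] at hr
      rw [if_neg (by omega), mul_left_comm, rowterm]
    have s3 : (seg (p - a + 1) (p + q - a)).map
        (fun j => b⁻¹ ^ (j - 1) * ((-1) ^ (a - p) * f ^ j)) =
        (seg (p - a + 1) (p + q - a)).map (fun j => (-1) ^ (a - p) * (f ^ j * b ^ (1 - j))) := by
      apply List.map_congr_left
      intro r _
      rw [mul_left_comm, colterm]
    rw [s1, s2, s3, sum_map_mul, sum_map_mul, sum_map_neg,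
      show -(a - p) + 1 = p - a + 1 by ring, show 1 - -(a - p) = a - p + 1 by ring,
      show -(p + q - a) = a - p - q by ring]
    simp
    ring

lemma famB (X1 X2 Y1 Y2 : List ℂ) (hX1 : ∀ b ∈ X1, b ≠ 0) (hX2 : ∀ b ∈ X2, b ≠ 0)
    (hY : ∀ f ∈ Y1 ++ Y2, f ≠ 0)
    (hd1 : ∀ b ∈ X1, ∀ f ∈ Y1 ++ Y2, b ≠ f) (hd2 : ∀ b ∈ X2, ∀ f ∈ Y1 ++ Y2, b ≠ f)
    (p q a k : ℤ) (hk : k = p + q - a) :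
    Delta id (X1.map (fun x => x⁻¹)) (X2.map (fun x => x⁻¹)) ((Y1 ++ Y2).map (fun x => x⁻¹))
      (seg 1 (-k)) (seg 1 k) (seg (p - a + 1) p) [] 0 =
    (-1) ^ (k * X1.length + k * X2.length + (k * k.toNat + k * a.toNat) +
      ((X1.length * X2.length + (-k).toNat.choose 2 : ℕ) : ℤ) +
      ((Y1.length * Y2.length + k.toNat.choose 2 + a.toNat.choose 2 : ℕ) : ℤ)) *
      (X2 ++ X1).prod ^ (a - (p + q) + 1) *
      ((Y2 ++ Y1).map (fun f => -f)).prod ^ (1 - a + (p + q)) *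
      Delta id X2 X1 (Y2 ++ Y1) (seg 1 (-k)) (seg 1 k) [] (seg (q - a + 1) q) 0 := by
  have H : ∀ b f : ℂ, b ≠ 0 → f ≠ 0 → b ≠ f →
      -phi b f 0 + (((seg 1 k).map fun j => b⁻¹ ^ (j - 1) * f ^ j).sum + 0) +
        ((seg 1 (-k)).map fun r => (-f⁻¹) ^ (r - 1) * ((-1) ^ r * b ^ r)).sum = -phi b f k := by
    intro b f hb hf hbf
    rw [geo b f hb hf hbf 0 k]
    simp only [colterm, rowterm, sum_map_neg]
    simp
    ring
  have hc := core X1 X2 Y1 Y2 (seg 1 (-k)) (seg 1 k) (seg (p - a + 1) p) []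
    k k (a - (p + q) + 1) (1 - a + (p + q)) 0 0
    hX1 hX2 hY (Or.inr rfl) (fun j f => f ^ j) (fun j f => 0) (fun j f => 0)
    (fun b r => (-1) ^ r * b ^ r) (fun b r => (-1) ^ r * b ^ r) ?_ ?_
  · rw [hc]
    have g1 : ((seg 1 (-k)).map (fun r => 2 - (1 - a + (p + q)) - r)).reverse = seg 1 (-k) := by
      rw [seg_reflect]; congr 1 <;> rw [hk] <;> ring
    have g2 : ((seg 1 k).map (fun r => 2 - (a - (p + q) + 1) - r)).reverse = seg 1 k := by
      rw [seg_reflect]; congr 1 <;> rw [hk] <;> ring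
    have g3 : ((seg (p - a + 1) p).map (fun r => 2 - (a - (p + q) + 1) - r)).reverse =
        seg (q - a + 1) q := by
      rw [seg_reflect]; congr 1 <;> ring
    rw [g1, g2, g3]
    have l1 : (seg 1 k).length = k.toNat := by rw [seg_length]; congr 1; ring
    have l2 : (seg (p - a + 1) p).length = a.toNat := by rw [seg_length]; congr 1; ring
    have l3 : (seg 1 (-k)).length = (-k).toNat := by rw [seg_length]; congr 1; ring
    rw [l1, l2, l3]
    simp
  · intro b hb f hf
    have hb0 := hX1 b hb
    have hf0 := hY f hf
    have hbf := hd1 b hb f hf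
    rw [inv_phi0 b f hb0 hf0 hbf, rhs_phi b f hb0 hf0 k _ _ _ 0 k (by rw [hk]; ring)
      (by rw [hk]; ring) ⟨k, by ring⟩]
    simpa using H b f hb0 hf0 hbf
  · intro b hb f hf
    have hb0 := hX2 b hb
    have hf0 := hY f hf
    have hbf := hd2 b hb f hf
    have hr := rhs_phi b f hb0 hf0 k (a - (p + q) + 1) (1 - a + (p + q)) 0 0 k (by rw [hk]; ring)
      (by rw [hk]; ring) ⟨k, by ring⟩
    rw [zpow_zero] at hr
    rw [hr, zpow_zero, inv_phi0 b f hb0 hf0 hbf]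
    simpa using H b f hb0 hf0 hbf

end families

section signs

def tri (x : ℤ) : ℤ := x * (x - 1) / 2

lemma tri_two (x : ℤ) : 2 * tri x = x * (x - 1) :=
  Int.two_mul_ediv_two_of_even (Int.even_mul_pred_self x)

lemma tri_add (x y : ℤ) : tri (x + y) = tri x + tri y + x * y := by
  have h1 := tri_two x
  have h2 := tri_two y
  have h3 := tri_two (x + y)
  nlinarith

lemma tri_neg (x : ℤ) : tri (-x) = tri x + x := by
  have h1 := tri_two x
  have h3 := tri_two (-x)
  nlinarith

lemma choose_tri (n : ℕ) : ((n.choose 2 : ℕ) : ℤ) = tri n := by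
  induction n with
  | zero => rfl
  | succ n ih =>
    rw [Nat.choose_succ_succ' n 1, Nat.choose_one_right]
    push_cast
    rw [ih, tri_add]
    simp [tri]
    ring

lemma zmod_sign {A B : ℤ} (h : (A : ZMod 2) = (B : ZMod 2)) : (-1 : ℂ) ^ A = (-1) ^ B := by
  apply m1_zpow_eq
  rw [ZMod.intCast_eq_intCast_iff_dvd_sub] at h
  obtain ⟨c, hc⟩ := h
  exact ⟨-c, by push_cast at hc; linarith⟩

lemma parA (m1 m2 n1 n2 : ℕ) (s p q θ : ℤ) (hp : p = s + (m1 - n1)) (hq : q = -s + (m2 - n2))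
    (hθ : θ = tri (m1 + m2) + tri (n1 + n2)) :
    (-1 : ℂ) ^ ((if 0 ≤ p then p * (s + n2) else p * m2) + θ) *
    (-1) ^ (p * m1 + q * m2 + (p * p.toNat + q * q.toNat) +
      ((m1 * m2 + ((-p).toNat + (-q).toNat).choose 2 : ℕ) : ℤ) +
      ((n1 * n2 + p.toNat.choose 2 + q.toNat.choose 2 + p.toNat * q.toNat : ℕ) : ℤ) +
      (((m1 + m2).choose 2 + (n1 + n2).choose 2 + m1 * m2 + n1 * n2 : ℕ) : ℤ)) =
    (-1) ^ ((if 0 ≤ q then q * (-s + n1) else q * m1) + θ) := by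
  rw [← zpow_add₀ (by norm_num)]
  simp only [Nat.cast_add, Nat.cast_mul, choose_tri]
  have key := tri_add p q
  have e : p + q = (m1 + m2) + -(n1 + n2) := by rw [hp, hq]; ring
  rw [e, tri_add (m1 + m2), tri_neg] at key
  have key' := congrArg (Int.cast (R := ZMod 2)) key
  rw [← sub_eq_zero] at key'
  have t0 : tri 0 = 0 := rfl
  clear e key
  rcases le_or_gt 0 p with h1 | h1 <;> rcases le_or_gt 0 q with h2 | h2
  · rw [if_pos h1, if_pos h2, Int.toNat_of_nonneg h1, Int.toNat_of_nonneg h2,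
      Int.toNat_of_nonpos (by omega : -p ≤ 0), Int.toNat_of_nonpos (by omega : -q ≤ 0)]
    simp only [Nat.cast_zero, zero_add, add_zero, t0]
    apply zmod_sign
    clear h1 h2
    generalize tri p = C at *
    generalize tri q = D at *
    subst hp hq hθ
    push_cast at key' ⊢
    generalize ((tri (m1 + m2) : ℤ) : ZMod 2) = A at *
    generalize ((tri (n1 + n2) : ℤ) : ZMod 2) = B at *
    generalize (C : ZMod 2) = C' at *
    generalize (D : ZMod 2) = D' at *
    generalize (m1 : ZMod 2) = a1 at *
    generalize (m2 : ZMod 2) = a2 at *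
    generalize (n1 : ZMod 2) = b1 at *
    generalize (n2 : ZMod 2) = b2 at *
    generalize (s : ZMod 2) = s' at *
    revert A B C' D' a1 a2 b1 b2 s'
    decide +kernel
  · rw [if_pos h1, if_neg (by omega), Int.toNat_of_nonneg h1, Int.toNat_of_nonpos h2.le,
      Int.toNat_of_nonpos (by omega : -p ≤ 0), Int.toNat_of_nonneg (by omega : 0 ≤ -q)]
    simp only [Nat.cast_zero, zero_add, add_zero, mul_zero, zero_mul, t0, tri_neg]
    apply zmod_sign
    clear h1 h2
    generalize tri p = C at *
    generalize tri q = D at *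
    subst hp hq hθ
    push_cast at key' ⊢
    generalize ((tri (m1 + m2) : ℤ) : ZMod 2) = A at *
    generalize ((tri (n1 + n2) : ℤ) : ZMod 2) = B at *
    generalize (C : ZMod 2) = C' at *
    generalize (D : ZMod 2) = D' at *
    generalize (m1 : ZMod 2) = a1 at *
    generalize (m2 : ZMod 2) = a2 at *
    generalize (n1 : ZMod 2) = b1 at *
    generalize (n2 : ZMod 2) = b2 at *
    generalize (s : ZMod 2) = s' at *
    revert A B C' D' a1 a2 b1 b2 s'
    decide +kernel
  · rw [if_neg (by omega), if_pos h2, Int.toNat_of_nonneg h2, Int.toNat_of_nonpos h1.le,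
      Int.toNat_of_nonpos (by omega : -q ≤ 0), Int.toNat_of_nonneg (by omega : 0 ≤ -p)]
    simp only [Nat.cast_zero, zero_add, add_zero, mul_zero, zero_mul, t0, tri_neg]
    apply zmod_sign
    clear h1 h2
    generalize tri p = C at *
    generalize tri q = D at *
    subst hp hq hθ
    push_cast at key' ⊢
    generalize ((tri (m1 + m2) : ℤ) : ZMod 2) = A at *
    generalize ((tri (n1 + n2) : ℤ) : ZMod 2) = B at *
    generalize (C : ZMod 2) = C' at *
    generalize (D : ZMod 2) = D' at *
    generalize (m1 : ZMod 2) = a1 at *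
    generalize (m2 : ZMod 2) = a2 at *
    generalize (n1 : ZMod 2) = b1 at *
    generalize (n2 : ZMod 2) = b2 at *
    generalize (s : ZMod 2) = s' at *
    revert A B C' D' a1 a2 b1 b2 s'
    decide +kernel
  · rw [if_neg (by omega), if_neg (by omega), Int.toNat_of_nonpos h2.le, Int.toNat_of_nonpos h1.le,
      Int.toNat_of_nonneg (by omega : 0 ≤ -q), Int.toNat_of_nonneg (by omega : 0 ≤ -p)]
    simp only [Nat.cast_zero, zero_add, add_zero, mul_zero, zero_mul, t0, tri_neg, tri_add (-p)]
    apply zmod_sign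
    clear h1 h2
    generalize tri p = C at *
    generalize tri q = D at *
    subst hp hq hθ
    push_cast at key' ⊢
    generalize ((tri (m1 + m2) : ℤ) : ZMod 2) = A at *
    generalize ((tri (n1 + n2) : ℤ) : ZMod 2) = B at *
    generalize (C : ZMod 2) = C' at *
    generalize (D : ZMod 2) = D' at *
    generalize (m1 : ZMod 2) = a1 at *
    generalize (m2 : ZMod 2) = a2 at *
    generalize (n1 : ZMod 2) = b1 at *
    generalize (n2 : ZMod 2) = b2 at *
    generalize (s : ZMod 2) = s' at *
    revert A B C' D' a1 a2 b1 b2 s'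
    decide +kernel

lemma parB (m1 m2 n1 n2 : ℕ) (a k θ : ℤ) (ha : 0 ≤ a)
    (hk : k = ((m1 + m2) + -(n1 + n2)) + -a)
    (hθ : θ = tri (m1 + m2) + tri (n1 + n2)) :
    (-1 : ℂ) ^ ((if 0 ≤ k then a * m2 else a * (m1 - n1 + n2 + 1)) + θ) *
    (-1) ^ (k * m1 + k * m2 + (k * k.toNat + k * a.toNat) +
      ((m1 * m2 + (-k).toNat.choose 2 : ℕ) : ℤ) +
      ((n1 * n2 + k.toNat.choose 2 + a.toNat.choose 2 : ℕ) : ℤ) +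
      (((m1 + m2).choose 2 + (n1 + n2).choose 2 + m1 * m2 + n1 * n2 : ℕ) : ℤ)) =
    (-1) ^ ((if 0 ≤ k then a * (1 + m1) else a * (m2 - n2 + n1)) + θ) := by
  rw [← zpow_add₀ (by norm_num)]
  simp only [Nat.cast_add, Nat.cast_mul, choose_tri]
  have key : tri k = _ := congrArg tri hk
  rw [tri_add _ (-a), tri_add (m1 + m2), tri_neg, tri_neg] at key
  have key' := congrArg (Int.cast (R := ZMod 2)) key
  rw [← sub_eq_zero] at key'
  have t0 : tri 0 = 0 := rfl
  clear key
  rcases le_or_gt 0 k with h1 | h1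
  · rw [if_pos h1, if_pos h1, Int.toNat_of_nonneg h1, Int.toNat_of_nonneg ha,
      Int.toNat_of_nonpos (by omega : -k ≤ 0)]
    simp only [Nat.cast_zero, zero_add, add_zero, t0]
    apply zmod_sign
    clear h1 ha
    generalize tri k = C at *
    generalize tri a = D at *
    subst hk hθ
    push_cast at key' ⊢
    generalize ((tri (m1 + m2) : ℤ) : ZMod 2) = A at *
    generalize ((tri (n1 + n2) : ℤ) : ZMod 2) = B at *
    generalize (C : ZMod 2) = C' at *
    generalize (D : ZMod 2) = D' at *
    generalize (m1 : ZMod 2) = a1 at *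
    generalize (m2 : ZMod 2) = a2 at *
    generalize (n1 : ZMod 2) = b1 at *
    generalize (n2 : ZMod 2) = b2 at *
    generalize (a : ZMod 2) = s' at *
    revert A B C' D' a1 a2 b1 b2 s'
    decide +kernel
  · rw [if_neg (by omega), if_neg (by omega), Int.toNat_of_nonpos h1.le, Int.toNat_of_nonneg ha,
      Int.toNat_of_nonneg (by omega : 0 ≤ -k)]
    simp only [Nat.cast_zero, zero_add, add_zero, mul_zero, zero_mul, t0, tri_neg]
    apply zmod_sign
    clear h1 ha
    generalize tri k = C at *
    generalize tri a = D at *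
    subst hk hθ
    push_cast at key' ⊢
    generalize ((tri (m1 + m2) : ℤ) : ZMod 2) = A at *
    generalize ((tri (n1 + n2) : ℤ) : ZMod 2) = B at *
    generalize (C : ZMod 2) = C' at *
    generalize (D : ZMod 2) = D' at *
    generalize (m1 : ZMod 2) = a1 at *
    generalize (m2 : ZMod 2) = a2 at *
    generalize (n1 : ZMod 2) = b1 at *
    generalize (n2 : ZMod 2) = b2 at *
    generalize (a : ZMod 2) = s' at *
    revert A B C' D' a1 a2 b1 b2 s'
    decide +kernel
end signs

section final

lemma chiA (B1 B2 F1 F2 : List ℂ) (χ : ℤ → ℤ → ℂ) (h : IsChi id B1 B2 F1 F2 χ)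
    (a s p q θ : ℤ) (hp : p = s + (B1.length - F1.length)) (hq : q = -s + (B2.length - F2.length))
    (hθ : θ = tri (B1.length + B2.length) + tri (F1.length + F2.length))
    (pa : p ≤ a) (qa : q ≤ a) (ha : 0 ≤ a) :
    χ a s = (-1 : ℂ) ^ ((if 0 ≤ p then p * (s + F2.length) else p * B2.length) + θ) *
      (Delta id B1 B2 (F1 ++ F2) (seg 1 (-p) ++ seg (a - p + 1) (a - p - q)) [] (seg 1 p)
        (seg (p - a + 1) (p + q - a)) (a - p) / Dden id (B1 ++ B2) (F1 ++ F2)) := by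
  unfold IsChi at h
  obtain ⟨-, h1, h2, h3, h4, -⟩ := h
  have e1 : s - a + ((B1.length : ℤ) - F1.length) + 1 = p - a + 1 := by rw [hp]; ring
  have e2 : -a + ((B1.length : ℤ) - F1.length) + ((B2.length : ℤ) - F2.length) = p + q - a := by
    rw [hp, hq]; ring
  have e3 : a - s - ((B1.length : ℤ) - F1.length) = a - p := by rw [hp]; ring
  have e4 : a - ((B1.length : ℤ) - F1.length) - ((B2.length : ℤ) - F2.length) = a - p - q := by
    rw [hp, hq]; ring
  have e5 : -s - ((B1.length : ℤ) - F1.length) = -p := by rw [hp]; ring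
  simp only [tri] at hθ
  simp only [e1, e2, e3, e4, e5, ← hp, ← hq, ← hθ] at h1 h2 h3 h4
  rw [← mul_div_assoc]
  rcases le_or_gt 0 p with c1 | c1 <;> rcases le_or_gt 0 q with c2 | c2
  · rw [if_pos c1, seg_nil 1 (-p) (by omega), seg_nil (a - p + 1) _ (by omega), List.append_nil,
      h1 a s (by omega) (by omega) ha (by omega) (by omega)]
    simp only [e1, e2, e3, e4, e5, ← hp, ← hq, ← hθ]
  · rw [if_pos c1, seg_nil 1 (-p) (by omega), seg_nil (p - a + 1) _ (by omega), List.nil_append,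
      h2 a s (by omega) (by omega) ha (by omega) (by omega)]
    simp only [e1, e2, e3, e4, e5, ← hp, ← hq, ← hθ]
  · rw [if_neg (by omega), seg_nil 1 p (by omega), seg_nil (a - p + 1) _ (by omega),
      List.append_nil, h3 a s (by omega) (by omega) ha (by omega) (by omega)]
    simp only [e1, e2, e3, e4, e5, ← hp, ← hq, ← hθ]
  · rw [if_neg (by omega), seg_nil 1 p (by omega), seg_nil (p - a + 1) _ (by omega),
      h4 a s (by omega) (by omega) ha (by omega) (by omega)]
    simp only [e1, e2, e3, e4, e5, ← hp, ← hq, ← hθ]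

lemma chiB (B1 B2 F1 F2 : List ℂ) (χ : ℤ → ℤ → ℂ) (h : IsChi id B1 B2 F1 F2 χ)
    (a s p q k θ : ℤ) (hp : p = s + (B1.length - F1.length))
    (hq : q = -s + (B2.length - F2.length)) (hk : k = p + q - a)
    (hθ : θ = tri (B1.length + B2.length) + tri (F1.length + F2.length))
    (pa : a ≤ p) :
    χ a s = (-1 : ℂ) ^ ((if 0 ≤ k then a * B2.length
        else a * (B1.length - F1.length + F2.length + 1)) + θ) *
      (Delta id B1 B2 (F1 ++ F2) (seg 1 (-k)) (seg 1 k) (seg (p - a + 1) p) [] 0 /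
        Dden id (B1 ++ B2) (F1 ++ F2)) := by
  unfold IsChi at h
  obtain ⟨-, -, -, -, -, h1, h2, -⟩ := h
  have e1 : s - a + ((B1.length : ℤ) - F1.length) + 1 = p - a + 1 := by rw [hp]; ring
  have e2 : -a + ((B1.length : ℤ) - F1.length) + ((B2.length : ℤ) - F2.length) = k := by
    rw [hk, hp, hq]; ring
  have e4 : a - ((B1.length : ℤ) - F1.length) - ((B2.length : ℤ) - F2.length) = -k := by
    rw [hk, hp, hq]; ring
  simp only [tri] at hθ
  rw [← mul_div_assoc]
  rcases le_or_gt 0 k with c1 | c1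
  · rw [if_pos c1, seg_nil 1 (-k) (by omega), h1 a s (by omega) (by omega)]
    simp only [e1, e2, ← hp, ← hθ]
  · rw [if_neg (by omega), seg_nil 1 k (by omega), h2 a s (by omega) (by omega)]
    simp only [e1, e4, ← hp, ← hθ]

lemma chiC (B1 B2 F1 F2 : List ℂ) (χ : ℤ → ℤ → ℂ) (h : IsChi id B1 B2 F1 F2 χ)
    (a s p q k θ : ℤ) (hp : p = s + (B1.length - F1.length))
    (hq : q = -s + (B2.length - F2.length)) (hk : k = p + q - a)
    (hθ : θ = tri (B1.length + B2.length) + tri (F1.length + F2.length))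
    (qa : a ≤ q) :
    χ a s = (-1 : ℂ) ^ ((if 0 ≤ k then a * (1 + B2.length)
        else a * (B1.length - F1.length + F2.length)) + θ) *
      (Delta id B1 B2 (F1 ++ F2) (seg 1 (-k)) (seg 1 k) [] (seg (p - a + 1) p) 0 /
        Dden id (B1 ++ B2) (F1 ++ F2)) := by
  unfold IsChi at h
  obtain ⟨-, -, -, -, -, -, -, h1, h2⟩ := h
  have e1 : s - a + ((B1.length : ℤ) - F1.length) + 1 = p - a + 1 := by rw [hp]; ring
  have e2 : -a + ((B1.length : ℤ) - F1.length) + ((B2.length : ℤ) - F2.length) = k := by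
    rw [hk, hp, hq]; ring
  have e4 : a - ((B1.length : ℤ) - F1.length) - ((B2.length : ℤ) - F2.length) = -k := by
    rw [hk, hp, hq]; ring
  simp only [tri] at hθ
  rw [← mul_div_assoc]
  rcases le_or_gt 0 k with c1 | c1
  · rw [if_pos c1, seg_nil 1 (-k) (by omega), h1 a s (by omega) (by omega)]
    simp only [e1, e2, ← hp, ← hθ]
  · rw [if_neg (by omega), seg_nil 1 k (by omega), h2 a s (by omega) (by omega)]
    simp only [e1, e4, ← hp, ← hθ]

lemma mainA (X1 X2 Y1 Y2 : List ℂ) (hX : ∀ b ∈ X1 ++ X2, b ≠ 0) (hY : ∀ f ∈ Y1 ++ Y2, f ≠ 0)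
    (hd : ∀ b ∈ X1 ++ X2, ∀ f ∈ Y1 ++ Y2, b ≠ f) (χ χ' : ℤ → ℤ → ℂ)
    (h : IsChi id (X1.map (fun x => x⁻¹)) (X2.map (fun x => x⁻¹)) (Y1.map (fun x => x⁻¹))
      (Y2.map (fun x => x⁻¹)) χ) (h' : IsChi id X2 X1 Y2 Y1 χ') (a s : ℤ) (ha : 0 ≤ a)
    (pa : s + (X1.length - Y1.length) ≤ a) (qa : -s + (X2.length - Y2.length) ≤ a) :
    χ a s = ((X2 ++ X1).prod / ((Y2 ++ Y1).map (fun f => -f)).prod) ^ a * χ' a (-s) := by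
  obtain ⟨p, hp⟩ : ∃ p : ℤ, p = s + (X1.length - Y1.length) := ⟨_, rfl⟩
  obtain ⟨q, hq⟩ : ∃ q : ℤ, q = -s + (X2.length - Y2.length) := ⟨_, rfl⟩
  obtain ⟨θ, hθ⟩ : ∃ θ : ℤ, θ = tri (X1.length + X2.length) + tri (Y1.length + Y2.length) :=
    ⟨_, rfl⟩
  have c1 := chiA _ _ _ _ χ h a s p q θ (by simpa using hp) (by simpa using hq) (by simpa using hθ)
    (by omega) (by omega) ha
  have c2 := chiA _ _ _ _ χ' h' a (-s) q p θ hq (by simpa using hp)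
    (by rw [hθ, add_comm (X1.length : ℤ), add_comm (Y1.length : ℤ)]) (by omega) (by omega) ha
  have f := famA X1 X2 Y1 Y2 (fun b hb => hX b (by simp [hb])) (fun b hb => hX b (by simp [hb])) hY
    (fun b hb => hd b (by simp [hb])) (fun b hb => hd b (by simp [hb])) p q a ha
  have g := combine X1 X2 Y1 Y2 hX hY a _ (p + q) (by rw [hp, hq]; ring) _ _ f
  rw [← List.map_append, ← List.map_append, g] at c1
  rw [c1, c2]
  have par := parA X1.length X2.length Y1.length Y2.length s p q θ hp hq hθ
  simp only [List.length_map] at par ⊢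
  rw [← par]
  ring

lemma mainB (X1 X2 Y1 Y2 : List ℂ) (hX : ∀ b ∈ X1 ++ X2, b ≠ 0) (hY : ∀ f ∈ Y1 ++ Y2, f ≠ 0)
    (hd : ∀ b ∈ X1 ++ X2, ∀ f ∈ Y1 ++ Y2, b ≠ f) (χ χ' : ℤ → ℤ → ℂ)
    (h : IsChi id (X1.map (fun x => x⁻¹)) (X2.map (fun x => x⁻¹)) (Y1.map (fun x => x⁻¹))
      (Y2.map (fun x => x⁻¹)) χ) (h' : IsChi id X2 X1 Y2 Y1 χ') (a s : ℤ) (ha : 0 ≤ a)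
    (pa : a ≤ s + (X1.length - Y1.length)) :
    χ a s = ((X2 ++ X1).prod / ((Y2 ++ Y1).map (fun f => -f)).prod) ^ a * χ' a (-s) := by
  obtain ⟨p, hp⟩ : ∃ p : ℤ, p = s + (X1.length - Y1.length) := ⟨_, rfl⟩
  obtain ⟨q, hq⟩ : ∃ q : ℤ, q = -s + (X2.length - Y2.length) := ⟨_, rfl⟩
  obtain ⟨k, hk⟩ : ∃ k : ℤ, k = p + q - a := ⟨_, rfl⟩
  obtain ⟨θ, hθ⟩ : ∃ θ : ℤ, θ = tri (X1.length + X2.length) + tri (Y1.length + Y2.length) :=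
    ⟨_, rfl⟩
  have c1 := chiB _ _ _ _ χ h a s p q k θ (by simpa using hp) (by simpa using hq) hk
    (by simpa using hθ) (by omega)
  have c2 := chiC _ _ _ _ χ' h' a (-s) q p k θ hq (by simpa using hp) (by rw [hk]; ring)
    (by rw [hθ, add_comm (X1.length : ℤ), add_comm (Y1.length : ℤ)]) (by omega)
  have f := famB X1 X2 Y1 Y2 (fun b hb => hX b (by simp [hb])) (fun b hb => hX b (by simp [hb])) hY
    (fun b hb => hd b (by simp [hb])) (fun b hb => hd b (by simp [hb])) p q a k hk
  have g := combine X1 X2 Y1 Y2 hX hY a _ (p + q) (by rw [hp, hq]; ring) _ _ f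
  rw [← List.map_append, ← List.map_append, g] at c1
  rw [c1, c2]
  have par := parB X1.length X2.length Y1.length Y2.length a k θ ha (by rw [hk, hp, hq]; ring) hθ
  simp only [List.length_map] at par ⊢
  rw [← par]
  ring

lemma map_inv_inv (X : List ℂ) : (X.map (fun x => x⁻¹)).map (fun x => x⁻¹) = X := by
  induction X with
  | nil => rfl
  | cons x X ih => simp

lemma prod_map_inv' (X : List ℂ) : (X.map (fun x => x⁻¹)).prod = X.prod⁻¹ := by
  induction X with
  | nil => simp
  | cons x X ih => simp [ih, mul_comm]

lemma mainAll (X1 X2 Y1 Y2 : List ℂ) (hX : ∀ b ∈ X1 ++ X2, b ≠ 0) (hY : ∀ f ∈ Y1 ++ Y2, f ≠ 0)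
    (hd : ∀ b ∈ X1 ++ X2, ∀ f ∈ Y1 ++ Y2, b ≠ f) (χ χ' : ℤ → ℤ → ℂ)
    (h : IsChi id (X1.map (fun x => x⁻¹)) (X2.map (fun x => x⁻¹)) (Y1.map (fun x => x⁻¹))
      (Y2.map (fun x => x⁻¹)) χ) (h' : IsChi id X2 X1 Y2 Y1 χ') (a s : ℤ) (ha : 0 ≤ a) :
    χ a s = ((X2 ++ X1).prod / ((Y2 ++ Y1).map (fun f => -f)).prod) ^ a * χ' a (-s) := by
  by_cases pa : a ≤ s + ((X1.length : ℤ) - Y1.length)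
  · exact mainB X1 X2 Y1 Y2 hX hY hd χ χ' h h' a s ha pa
  by_cases qa : a ≤ -s + ((X2.length : ℤ) - Y2.length)
  · have hi : ∀ (P : ℂ → Prop) (U V : List ℂ), (∀ b ∈ U ++ V, P b⁻¹) →
        ∀ b ∈ V.map (fun x => x⁻¹) ++ U.map (fun x => x⁻¹), P b := by
      intro P U V hP b hb
      simp only [List.mem_append, List.mem_map] at hb
      rcases hb with ⟨c, hc, rfl⟩ | ⟨c, hc, rfl⟩
      · exact hP c (by simp [hc])
      · exact hP c (by simp [hc])
    have r := mainB (X2.map (fun x => x⁻¹)) (X1.map (fun x => x⁻¹)) (Y2.map (fun x => x⁻¹))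
      (Y1.map (fun x => x⁻¹)) (hi _ _ _ fun b hb => inv_ne_zero (hX b hb))
      (hi _ _ _ fun b hb => inv_ne_zero (hY b hb))
      (hi _ _ _ fun b hb => hi _ _ _ fun f hf => by
        intro hbf
        exact hd b hb f hf (inv_injective hbf)) χ' χ
      (by simpa only [map_inv_inv] using h') h a (-s) ha (by simpa using qa)
    rw [r, neg_neg, ← mul_assoc, ← mul_zpow, prod_map_neg, prod_map_neg]
    have hX' : (X2 ++ X1).prod ≠ 0 := list_prod_ne_zero _ (by
      intro y hy; apply hX; simp at hy ⊢; tauto)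
    have hYp : (Y2 ++ Y1).prod ≠ 0 := list_prod_ne_zero _ (by
      intro y hy; apply hY; simp at hy ⊢; tauto)
    have e1 : (X1.map (fun x => x⁻¹) ++ X2.map (fun x => x⁻¹)).prod = ((X2 ++ X1).prod)⁻¹ := by
      simp only [List.prod_append, prod_map_inv', mul_inv]; ring
    have e2 : (Y1.map (fun x => x⁻¹) ++ Y2.map (fun x => x⁻¹)).prod = ((Y2 ++ Y1).prod)⁻¹ := by
      simp only [List.prod_append, prod_map_inv', mul_inv]; ring
    have e3 : (Y1.map (fun x => x⁻¹) ++ Y2.map (fun x => x⁻¹)).length = (Y2 ++ Y1).length := by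
      simp [add_comm]
    rw [e1, e2, e3]
    have one : ∀ (x y : ℂ) (n : ℕ), x ≠ 0 → y ≠ 0 →
        x / ((-1) ^ n * y) * (x⁻¹ / ((-1) ^ n * y⁻¹)) = 1 := by
      intro x y n hx hy
      have : ((-1 : ℂ) ^ n) * (-1) ^ n = 1 := by rw [← mul_pow]; simp
      have h0 : (-1 : ℂ) ^ n ≠ 0 := by simp
      field_simp
      rw [pow_two, this]
    have hone := one _ _ (Y2 ++ Y1).length hX' hYp
    first
      | rw [hone, one_zpow, one_mul]
      | (push_cast at *; rw [hone, one_zpow, one_mul])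
  · exact mainA X1 X2 Y1 Y2 hX hY hd χ χ' h h' a s ha (by omega) (by omega)

end final
/-- **σ-transformation of the Wronskian supercharacters.** -/
theorem sigma_transform (M N : ℕ) (z : ℤ → ℂ) (B1 B2 F1 F2 : List ℤ)
    (hB1 : ∀ i ∈ B1, 1 ≤ i ∧ i ≤ (M : ℤ)) (hB2 : ∀ i ∈ B2, 1 ≤ i ∧ i ≤ (M : ℤ))
    (hF1 : ∀ i ∈ F1, (M : ℤ) + 1 ≤ i ∧ i ≤ (M : ℤ) + N)
    (hF2 : ∀ i ∈ F2, (M : ℤ) + 1 ≤ i ∧ i ≤ (M : ℤ) + N)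
    (hnd : (B1 ++ B2 ++ F1 ++ F2).Nodup)
    (hz0 : ∀ i : ℤ, 1 ≤ i → i ≤ (M : ℤ) + N → z i ≠ 0)
    (hzd : ∀ i j : ℤ, 1 ≤ i → i ≤ (M : ℤ) + N → 1 ≤ j → j ≤ (M : ℤ) + N → i ≠ j → z i ≠ z j)
    (hzinvd : ∀ i j : ℤ, 1 ≤ i → i ≤ (M : ℤ) + N → 1 ≤ j → j ≤ (M : ℤ) + N → i ≠ j →
      (z i)⁻¹ ≠ (z j)⁻¹)
    (χσ χhat : ℤ → ℤ → ℂ)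
    (hχσ : IsChi (fun i => if i ≤ (M : ℤ) then (z ((M : ℤ) + 1 - i))⁻¹
        else (z (2 * (M : ℤ) + N + 1 - i))⁻¹) B1 B2 F1 F2 χσ)
    (hχhat : IsChi z
      (B2.map (fun b => (M : ℤ) + 1 - b)) (B1.map (fun b => (M : ℤ) + 1 - b))
      (F2.map (fun f => 2 * (M : ℤ) + N + 1 - f)) (F1.map (fun f => 2 * (M : ℤ) + N + 1 - f))
      χhat) :
    ∀ a s : ℤ, 0 ≤ a →
      χσ a s =
        (prodL (B2.map (fun b => (M : ℤ) + 1 - b) ++ B1.map (fun b => (M : ℤ) + 1 - b)) z /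
            prodL (F2.map (fun f => 2 * (M : ℤ) + N + 1 - f) ++
              F1.map (fun f => 2 * (M : ℤ) + N + 1 - f)) (fun f => -z f)) ^ a *
          χhat a (-s) := by
  intro a s ha
  set g : ℤ → ℂ := fun b => z ((M : ℤ) + 1 - b) with hg
  set k : ℤ → ℂ := fun f => z (2 * (M : ℤ) + N + 1 - f) with hk
  have hb : ∀ B : List ℤ, (∀ i ∈ B, 1 ≤ i ∧ i ≤ (M : ℤ)) →
      B.map (fun i => if i ≤ (M : ℤ) then (z ((M : ℤ) + 1 - i))⁻¹
        else (z (2 * (M : ℤ) + N + 1 - i))⁻¹) = (B.map g).map (fun x => x⁻¹) := by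
    intro B hB
    rw [List.map_map]
    apply List.map_congr_left
    intro i hi
    simp only [if_pos (hB i hi).2, Function.comp_apply, hg]
  have hf : ∀ F : List ℤ, (∀ i ∈ F, (M : ℤ) + 1 ≤ i ∧ i ≤ (M : ℤ) + N) →
      F.map (fun i => if i ≤ (M : ℤ) then (z ((M : ℤ) + 1 - i))⁻¹
        else (z (2 * (M : ℤ) + N + 1 - i))⁻¹) = (F.map k).map (fun x => x⁻¹) := by
    intro F hF
    rw [List.map_map]
    apply List.map_congr_left
    intro i hi
    have h1 : ¬ i ≤ (M : ℤ) := by have := (hF i hi).1; omega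
    simp only [if_neg h1, Function.comp_apply, hk]
  have h1 := IsChi_map _ _ _ _ _ _ hχσ
  rw [hb B1 hB1, hb B2 hB2, hf F1 hF1, hf F2 hF2] at h1
  have h2 := IsChi_map _ _ _ _ _ _ hχhat
  simp only [List.map_map] at h2
  have hX : ∀ b ∈ B1.map g ++ B2.map g, ∃ i : ℤ, 1 ≤ i ∧ i ≤ (M : ℤ) ∧ b = z i := by
    intro b hbm
    rw [← List.map_append] at hbm
    obtain ⟨i, hi, rfl⟩ := List.mem_map.1 hbm
    have : 1 ≤ i ∧ i ≤ (M : ℤ) := by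
      rcases List.mem_append.1 hi with h | h
      · exact hB1 i h
      · exact hB2 i h
    exact ⟨_, by omega, by omega, rfl⟩
  have hY : ∀ f ∈ F1.map k ++ F2.map k,
      ∃ i : ℤ, (M : ℤ) + 1 ≤ i ∧ i ≤ (M : ℤ) + N ∧ f = z i := by
    intro b hbm
    rw [← List.map_append] at hbm
    obtain ⟨i, hi, rfl⟩ := List.mem_map.1 hbm
    have : (M : ℤ) + 1 ≤ i ∧ i ≤ (M : ℤ) + N := by
      rcases List.mem_append.1 hi with h | h
      · exact hF1 i h
      · exact hF2 i h
    exact ⟨_, by omega, by omega, rfl⟩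
  have r := mainAll (B1.map g) (B2.map g) (F1.map k) (F2.map k)
    (by
      intro b hbm
      obtain ⟨i, i1, i2, rfl⟩ := hX b hbm
      exact hz0 i i1 (by omega))
    (by
      intro b hbm
      obtain ⟨i, i1, i2, rfl⟩ := hY b hbm
      exact hz0 i (by omega) i2)
    (by
      intro b hbm f hfm
      obtain ⟨i, i1, i2, rfl⟩ := hX b hbm
      obtain ⟨j, j1, j2, rfl⟩ := hY f hfm
      exact hzd i j i1 (by omega) (by omega) j2 (by omega))
    χσ χhat h1 h2 a s ha
  rw [r]
  simp only [prodL, List.map_append, List.map_map]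
  rfl

end Stmt4
end

section
/- Plücker identity for maximal minors. Let 𝒩 ≥ 1, let M be an 𝒩×(𝒩+2) matrix over a commutative ring, and for 1 ≤ a < b ≤ 𝒩+2 let D[a,b] denote the determinant of the 𝒩×𝒩 matrix obtained from M by deleting columns a and b. Then for all column indices 1 ≤ k1 < k2 < k3 < k4 ≤ 𝒩+2 one has D[k1,k2]·D[k3,k4] − D[k1,k3]·D[k2,k4] + D[k1,k4]·D[k2,k3] = 0. -/
namespace Stmt5

/-- The strictly monotone embedding `Fin n → Fin (n+2)` whose image misses
exactly the two columns `a < b`. -/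
def delTwo {n : ℕ} (a b : Fin (n + 2)) (h : a < b) : Fin n → Fin (n + 2) :=
  fun i =>
    b.succAbove
      ((Fin.castLT a (by
        have hab : (a : ℕ) < (b : ℕ) := h
        have hb := b.isLt
        omega)).succAbove i)

/-- The maximal minor `D[a,b]` of an `n × (n+2)` matrix obtained by deleting
columns `a` and `b` (keeping the remaining columns in their original order). -/
def minorDel {R : Type*} [CommRing R] {n : ℕ} (M : Matrix (Fin n) (Fin (n + 2)) R)
    (a b : Fin (n + 2)) (h : a < b) : R :=
  (M.submatrix id (delTwo a b h)).det

/-- Determinant of `M` bordered by two extra rows. -/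
def bord {R : Type*} [CommRing R] {n : ℕ} (M : Matrix (Fin n) (Fin (n + 2)) R)
    (u v : Fin (n + 2) → R) : R :=
  Matrix.det (Matrix.of (Matrix.vecCons u (Matrix.vecCons v M)))

theorem bord_single {R : Type*} [CommRing R] {n : ℕ} (M : Matrix (Fin n) (Fin (n + 2)) R)
    (a b : Fin (n + 2)) (h : a < b) :
    bord M (Pi.single b 1) (Pi.single a 1) = (-1) ^ ((a : ℕ) + (b : ℕ)) * minorDel M a b h := by
  have ha : (a : ℕ) < n + 1 := by
    have := b.isLt
    have h' : (a : ℕ) < b := h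
    omega
  have hs : b.succAbove (Fin.castLT a ha) = a := by
    rw [Fin.succAbove_of_castSucc_lt]
    · simp
    · simpa using h
  unfold bord
  rw [Matrix.det_succ_row_zero, Finset.sum_eq_single b]
  · rw [Matrix.det_succ_row_zero, Finset.sum_eq_single (Fin.castLT a ha)]
    · have : (Matrix.submatrix (Matrix.submatrix (Matrix.of (Matrix.vecCons
          (Pi.single b 1 : Fin (n + 2) → R) (Matrix.vecCons (Pi.single a 1) M)))
          Fin.succ b.succAbove) Fin.succ (Fin.castLT a ha).succAbove)
          = M.submatrix id (delTwo a b h) := by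
        ext i j
        rfl
      rw [this]
      simp only [minorDel, Matrix.submatrix_apply, hs]
      simp [pow_add]
      ring
    · intro j _ hj
      have : b.succAbove j ≠ a := by
        rw [← hs]
        exact fun e => hj (Fin.succAbove_right_injective e)
      simp [Pi.single_eq_of_ne this]
    · simp
  · intro j _ hj
    simp [Pi.single_eq_of_ne hj]
  · simp

/-- For each `u`, the map `bord M u` is given by a dot product. -/
theorem bord_linear {R : Type*} [CommRing R] {n : ℕ} (M : Matrix (Fin n) (Fin (n + 2)) R)
    (u : Fin (n + 2) → R) : ∃ g : Fin (n + 2) → R, ∀ v, bord M u v = ∑ j, v j * g j := by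
  refine ⟨fun j => (-1) ^ (1 + (j : ℕ)) * Matrix.det (Matrix.submatrix
    (Matrix.of (Matrix.vecCons u (Matrix.vecCons 0 M))) (Fin.succAbove 1) j.succAbove), ?_⟩
  intro v
  unfold bord
  rw [Matrix.det_succ_row _ 1]
  refine Finset.sum_congr rfl fun j _ => ?_
  have : (Matrix.submatrix (Matrix.of (Matrix.vecCons u (Matrix.vecCons v M)))
      (Fin.succAbove 1) j.succAbove) = (Matrix.submatrix
    (Matrix.of (Matrix.vecCons u (Matrix.vecCons 0 M))) (Fin.succAbove 1) j.succAbove) := by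
    ext i k
    refine Fin.cases ?_ (fun i => ?_) i
    · rfl
    · have : (1 : Fin (n + 2)).succAbove i.succ = i.succ.succ := by
        rw [← Fin.succ_zero_eq_one, Fin.succ_succAbove_succ]
        simp
      simp only [Matrix.submatrix_apply, this]
      rfl
  rw [this]
  change (-1) ^ (((1 : Fin (n + 2)) : ℕ) + (j : ℕ)) * v j * _ = v j * ((-1) ^ (1 + (j : ℕ)) * _)
  rw [Fin.val_one]
  ring

theorem bord_row {R : Type*} [CommRing R] {n : ℕ} (M : Matrix (Fin n) (Fin (n + 2)) R)
    (u : Fin (n + 2) → R) (i : Fin n) : bord M u (M i) = 0 := by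
  unfold bord
  refine Matrix.det_zero_of_row_eq (i := 1) (j := i.succ.succ) ?_ ?_
  · rw [← Fin.succ_zero_eq_one]
    exact fun e => (Fin.succ_ne_zero i) (Fin.succ_injective _ e).symm
  · rfl

theorem bord_rel {R : Type*} [CommRing R] {n : ℕ} (M : Matrix (Fin n) (Fin (n + 2)) R)
    (a b c d : Fin (n + 2) → R) :
    bord M a b * bord M c d - bord M a c * bord M b d + bord M a d * bord M b c = 0 := by
  obtain ⟨g, hg⟩ := bord_linear M a
  let N : Fin (n + 3) → Fin (n + 2) → R :=
    Matrix.vecCons b (Matrix.vecCons c (Matrix.vecCons d M))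
  let K : Matrix (Fin (n + 3)) (Fin (n + 3)) R :=
    Matrix.of fun i => Matrix.vecCons (bord M a (N i)) (N i)
  have hv : K.mulVec (Matrix.vecCons (-1) g) = 0 := by
    ext i
    simp [K, Matrix.mulVec, dotProduct, Fin.sum_univ_succ (n := n + 2), hg]
  have hK : K.det = 0 := by
    have h1 : (K.adjugate).mulVec (K.mulVec (Matrix.vecCons (-1) g)) = 0 := by
      rw [hv, Matrix.mulVec_zero]
    rw [Matrix.mulVec_mulVec, Matrix.adjugate_mul, Matrix.smul_mulVec, Matrix.one_mulVec] at h1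
    simpa using congrFun h1 0
  rw [Matrix.det_succ_column_zero, Fin.sum_univ_succ, Fin.sum_univ_succ, Fin.sum_univ_succ,
    Finset.sum_eq_zero] at hK
  · have e0 : K.submatrix (Fin.succAbove 0) Fin.succ =
        Matrix.of (Matrix.vecCons c (Matrix.vecCons d M)) := by
      ext i j
      rw [Matrix.submatrix_apply, Fin.zero_succAbove]
      rfl
    have e1 : K.submatrix (Fin.succAbove (Fin.succ 0)) Fin.succ =
        Matrix.of (Matrix.vecCons b (Matrix.vecCons d M)) := by
      ext i j
      refine Fin.cases ?_ (fun i => ?_) i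
      · rfl
      · rw [Matrix.submatrix_apply, Fin.succ_succAbove_succ, Fin.zero_succAbove]
        rfl
    have e2 : K.submatrix (Fin.succAbove (Fin.succ (Fin.succ 0))) Fin.succ =
        Matrix.of (Matrix.vecCons b (Matrix.vecCons c M)) := by
      ext i j
      refine Fin.cases ?_ (fun i => ?_) i
      · rfl
      · refine Fin.cases ?_ (fun i => ?_) i
        · rw [Matrix.submatrix_apply, Fin.succ_succAbove_succ]
          rfl
        · rw [Matrix.submatrix_apply, Fin.succ_succAbove_succ, Fin.succ_succAbove_succ,
            Fin.zero_succAbove]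
          rfl
    rw [e0, e1, e2] at hK
    have k0 : K 0 0 = bord M a b := rfl
    have k1 : K (Fin.succ 0) 0 = bord M a c := rfl
    have k2 : K (Fin.succ (Fin.succ 0)) 0 = bord M a d := rfl
    rw [k0, k1, k2] at hK
    change _ * bord M a b * bord M c d + (_ * bord M a c * bord M b d
      + (_ * bord M a d * bord M b c + 0)) = 0 at hK
    simp only [Fin.val_succ, Fin.val_zero] at hK
    linear_combination hK
  · intro i _
    have : K i.succ.succ.succ 0 = 0 := bord_row M a i
    rw [this]
    simp

/-- **Plücker identity for maximal minors.** -/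
theorem plucker {R : Type*} [CommRing R] {n : ℕ} (hn : 1 ≤ n)
    (M : Matrix (Fin n) (Fin (n + 2)) R)
    (k1 k2 k3 k4 : Fin (n + 2)) (h12 : k1 < k2) (h23 : k2 < k3) (h34 : k3 < k4) :
    minorDel M k1 k2 h12 * minorDel M k3 k4 h34 -
      minorDel M k1 k3 (h12.trans h23) * minorDel M k2 k4 (h23.trans h34) +
      minorDel M k1 k4 (h12.trans (h23.trans h34)) * minorDel M k2 k3 h23 = 0 := by
  have h := bord_rel M (Pi.single k4 1) (Pi.single k3 1) (Pi.single k2 1) (Pi.single k1 1)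
  rw [bord_single M _ _ h12, bord_single M _ _ h23, bord_single M _ _ h34,
    bord_single M _ _ (h12.trans h23), bord_single M _ _ (h23.trans h34),
    bord_single M _ _ (h12.trans (h23.trans h34))] at h
  have hs : ((-1 : R) ^ ((k1 : ℕ) + k2 + k3 + k4)) * (-1) ^ ((k1 : ℕ) + k2 + k3 + k4) = 1 := by
    rw [← mul_pow]
    simp
  have h' : (-1 : R) ^ ((k1 : ℕ) + k2 + k3 + k4) *
      (minorDel M k1 k2 h12 * minorDel M k3 k4 h34 -
      minorDel M k1 k3 (h12.trans h23) * minorDel M k2 k4 (h23.trans h34) +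
      minorDel M k1 k4 (h12.trans (h23.trans h34)) * minorDel M k2 k3 h23) = 0 := by
    rw [← h]
    simp only [pow_add]
    ring
  have h2 := congrArg (fun x => (-1 : R) ^ ((k1 : ℕ) + k2 + k3 + k4) * x) h'
  simpa only [← mul_assoc, hs, one_mul, mul_zero] using h2

end Stmt5
end
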